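/- Let α ∈ [N, N+1) for an integer N ≥ 0, and let Γ = {0} × ℝ ⊂ 𝔾_α be the singular line with metric d((0,s),(0,t)) = |s-t|^{1/(1+α)}. If α > 0, then Γ does not admit a bi-Lipschitz embedding into ℝ^{N+1} but does admit one into ℝ^{N+2} — in particular, the Hausdorff dimension of Γ equals 1 + α, and any metric space of Hausdorff dimension 1 + α > N + 1 cannot bi-Lipschitz embed into ℝ^{N+1}. -/

import Mathlib

open Real MeasureTheory

/-- One coordinate of a generator path. -/
structure Coord (M : ℕ) (a : ℤ) (x : ℕ → ℤ) : Prop where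
  zero : x 0 = 0
  last : x M = a
  inside : ∀ i, 0 < i → i < M → 1 ≤ x i ∧ x i + 1 ≤ a
  step : ∀ i, i < M → x (i + 1) = x i + 1 ∨ x (i + 1) = x i - 1

def SepC (x : ℕ → ℤ) (i j : ℕ) : Prop :=
  (x i + 1 ≤ x j ∧ x i + 1 ≤ x (j + 1) ∧ x (i + 1) + 1 ≤ x j ∧ x (i + 1) + 1 ≤ x (j + 1)) ∨
  (x j + 1 ≤ x i ∧ x (j + 1) + 1 ≤ x i ∧ x j + 1 ≤ x (i + 1) ∧ x (j + 1) + 1 ≤ x (i + 1))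

/-- A generator: a path of diagonal unit steps whose non consecutive boxes are disjoint. -/
structure Gen (M : ℕ) (a b : ℤ) (x y : ℕ → ℤ) : Prop where
  cx : Coord M a x
  cy : Coord M b y
  sep : ∀ i j, i + 2 ≤ j → j < M → SepC x i j ∨ SepC y i j
  turn : ∀ i, i + 1 < M → x (i + 2) - x (i + 1) = x (i + 1) - x i ∨
    y (i + 2) - y (i + 1) = y (i + 1) - y i

def prodA (a : ℕ → ℤ) : ℕ → ℤ
  | 0 => 1
  | n + 1 => prodA a n * a n

def eC (M : ℕ) (a : ℕ → ℤ) (x : ℕ → ℕ → ℤ) : ℕ → ℕ → ℤ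
  | 0, _ => 0
  | n + 1, i => prodA a n * x n (i / M ^ n) +
      (x n (i / M ^ n + 1) - x n (i / M ^ n)) * eC M a x n (i % M ^ n)

lemma Coord.nonneg {M : ℕ} {a : ℤ} {x : ℕ → ℤ} (h : Coord M a x) (hM : 2 ≤ M) (i : ℕ) (hi : i ≤ M) :
    0 ≤ x i ∧ x i ≤ a := by
  have h1 := h.inside 1 (by omega) (by omega)
  have h0 := h.zero
  have hl := h.last
  rcases Nat.eq_zero_or_pos i with rfl | h'
  · omega
  · rcases Nat.lt_or_ge i M with h'' | h''
    · have := h.inside i h' h''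
      omega
    · obtain rfl : i = M := by omega
      omega

lemma Coord.one {M : ℕ} {a : ℤ} {x : ℕ → ℤ} (h : Coord M a x) (hM : 2 ≤ M) : x 1 = 1 := by
  have h1 := h.inside 1 (by omega) (by omega)
  have h2 := h.step 0 (by omega)
  have h0 := h.zero
  simp at h2
  omega

lemma Coord.pred {M : ℕ} {a : ℤ} {x : ℕ → ℤ} (h : Coord M a x) (hM : 2 ≤ M) : x (M - 1) = a - 1 := by
  have h1 := h.inside (M - 1) (by omega) (by omega)
  have h2 := h.step (M - 1) (by omega)
  have h0 := h.last
  rw [show M - 1 + 1 = M by omega] at h2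
  omega

lemma conv_le {A e u v w : ℤ} (h0 : 0 ≤ e) (h1 : e ≤ A) (hu : u ≤ w) (hv : v ≤ w) :
    A * u + (v - u) * e ≤ A * w := by
  nlinarith [mul_nonneg (sub_nonneg.2 h1) (sub_nonneg.2 hu), mul_nonneg h0 (sub_nonneg.2 hv)]

lemma le_conv {A e u v w : ℤ} (h0 : 0 ≤ e) (h1 : e ≤ A) (hu : w ≤ u) (hv : w ≤ v) :
    A * w ≤ A * u + (v - u) * e := by
  nlinarith [mul_nonneg (sub_nonneg.2 h1) (sub_nonneg.2 hu), mul_nonneg h0 (sub_nonneg.2 hv)]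

lemma eC_decomp {M n I k : ℕ} (a : ℕ → ℤ) (x : ℕ → ℕ → ℤ) (hk : k < M ^ n) :
    eC M a x (n + 1) (M ^ n * I + k) = prodA a n * x n I + (x n (I + 1) - x n I) * eC M a x n k := by
  have h1 : (M ^ n * I + k) / M ^ n = I := by
    rw [Nat.mul_add_div (by omega), Nat.div_eq_of_lt hk, add_zero]
  have h2 : (M ^ n * I + k) % M ^ n = k := by
    rw [Nat.mul_add_mod, Nat.mod_eq_of_lt hk]
  simp only [eC, h1, h2]

lemma idx_decomp {M n i : ℕ} (hM : 2 ≤ M) (hi : i < M ^ (n + 1)) :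
    ∃ I k, I < M ∧ k < M ^ n ∧ i = M ^ n * I + k := by
  have hp : 0 < M ^ n := by positivity
  refine ⟨i / M ^ n, i % M ^ n, ?_, Nat.mod_lt _ hp, (Nat.div_add_mod i (M ^ n)).symm⟩
  rw [Nat.div_lt_iff_lt_mul hp, mul_comm, ← pow_succ]
  exact hi

section one
variable {M : ℕ} {a : ℕ → ℤ} {x : ℕ → ℕ → ℤ}

lemma prodA_pos (hM : 2 ≤ M) (hx : ∀ n, Coord M (a n) (x n)) (n : ℕ) : 1 ≤ prodA a n := by
  induction n with
  | zero => simp [prodA]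
  | succ n ih =>
    have h1 := (hx n).inside 1 (by omega) (by omega)
    simp only [prodA]
    nlinarith

lemma eC_range (hM : 2 ≤ M) (hx : ∀ n, Coord M (a n) (x n)) (n i : ℕ) (hi : i < M ^ n) :
    0 ≤ eC M a x n i ∧ eC M a x n i ≤ prodA a n := by
  induction n generalizing i with
  | zero => simp [eC, prodA]
  | succ n ih =>
    obtain ⟨I, k, hI, hk, rfl⟩ := idx_decomp hM hi
    rw [eC_decomp a x hk]
    obtain ⟨h0, h1⟩ := ih k hk
    have u := (hx n).nonneg hM I (by omega)
    have v := (hx n).nonneg hM (I + 1) (by omega)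
    constructor
    · simpa using le_conv h0 h1 u.1 v.1
    · simpa [prodA] using conv_le h0 h1 u.2 v.2

lemma eC_stable (hM : 2 ≤ M) (hx : ∀ n, Coord M (a n) (x n)) (n i : ℕ) (hi : i < M ^ n) (m : ℕ)
    (hm : n ≤ m) : eC M a x m i = eC M a x n i := by
  induction m, hm using Nat.le_induction with
  | base => rfl
  | succ m hm ih =>
    have h : i < M ^ m := lt_of_lt_of_le hi (Nat.pow_le_pow_right (by omega) hm)
    have := eC_decomp (I := 0) a x h
    simp only [mul_zero, zero_add] at this
    rw [this, (hx m).zero, (hx m).one hM, ih]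
    ring

variable {p K : ℝ}

lemma cast_pow_rpow (M n : ℕ) (p : ℝ) : (((M ^ n : ℕ) : ℝ)) ^ p = ((M : ℝ) ^ p) ^ n := by
  push_cast
  rw [← Real.rpow_natCast, ← Real.rpow_natCast, ← Real.rpow_mul (by positivity),
    ← Real.rpow_mul (by positivity), mul_comm]

lemma natpow_le {i M n : ℕ} {p : ℝ} (hp : 0 < p) (h : i ≤ M ^ n) : (i : ℝ) ^ p ≤ ((M : ℝ) ^ p) ^ n := by
  rw [← cast_pow_rpow]
  exact Real.rpow_le_rpow (by positivity) (by exact_mod_cast h) hp.le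

lemma le_natpow {i M n : ℕ} {p : ℝ} (hp : 0 < p) (h : M ^ n ≤ i) : ((M : ℝ) ^ p) ^ n ≤ (i : ℝ) ^ p := by
  rw [← cast_pow_rpow]
  exact Real.rpow_le_rpow (by positivity) (by exact_mod_cast h) hp.le

/-- A_n is comparable to `M^(np)`. -/
def Cmp (M : ℕ) (a : ℕ → ℤ) (p K : ℝ) : Prop :=
  ∀ n, ((M : ℝ) ^ p) ^ n ≤ K * prodA a n ∧ (prodA a n : ℝ) ≤ K * ((M : ℝ) ^ p) ^ n

lemma one_le_w {M : ℕ} {p : ℝ} (hM : 2 ≤ M) (hp : 0 < p) : 1 ≤ (M : ℝ) ^ p :=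
  Real.one_le_rpow (by exact_mod_cast (by omega : 1 ≤ M)) hp.le

lemma Cmp.one_le (hK : Cmp M a p K) : 1 ≤ K := by
  have := (hK 0).1
  simpa [prodA] using this

lemma eC_lower (hM : 2 ≤ M) (hp : 0 < p) (hx : ∀ n, Coord M (a n) (x n)) (hK : Cmp M a p K)
    (n i : ℕ) (hi : i < M ^ n) : (i : ℝ) ^ p ≤ K * (M : ℝ) ^ p * eC M a x n i := by
  have hK1 := hK.one_le
  have hw := one_le_w hM hp
  induction n generalizing i with
  | zero =>
    obtain rfl : i = 0 := by simpa using hi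
    simp [eC, hp.ne']
  | succ n ih =>
    obtain ⟨I, k, hI, hk, rfl⟩ := idx_decomp hM hi
    rcases Nat.eq_zero_or_pos I with rfl | hI0
    · rw [eC_stable hM hx n _ (by simpa using hk) (n + 1) (by omega)]
      exact ih _ (by simpa using hk)
    · have h1 : (prodA a n : ℝ) ≤ eC M a x (n + 1) (M ^ n * I + k) := by
        rw [eC_decomp a x hk]
        have := eC_range hM hx n k hk
        have u := (hx n).inside I hI0 hI
        have v : 1 ≤ x n (I + 1) := by
          rcases Nat.lt_or_ge (I + 1) M with h | h
          · exact ((hx n).inside (I + 1) (by omega) h).1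
          · have := (hx n).last
            rw [show I + 1 = M by omega]; omega
        have := le_conv this.1 this.2 u.1 v
        rw [mul_one] at this
        exact_mod_cast this
      calc _ ≤ ((M : ℝ) ^ p) ^ (n + 1) := natpow_le hp hi.le
        _ = (M : ℝ) ^ p * ((M : ℝ) ^ p) ^ n := by ring
        _ ≤ (M : ℝ) ^ p * (K * prodA a n) := by gcongr; exact (hK n).1
        _ = K * (M : ℝ) ^ p * prodA a n := by ring
        _ ≤ _ := by gcongr

lemma eC_lower' (hM : 2 ≤ M) (hp : 0 < p) (hx : ∀ n, Coord M (a n) (x n)) (hK : Cmp M a p K)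
    (n i : ℕ) (hi : i < M ^ n) :
    ((M ^ n - i : ℕ) : ℝ) ^ p ≤ K * (M : ℝ) ^ p * (prodA a n - eC M a x n i : ℤ) := by
  have hK1 := hK.one_le
  have hw := one_le_w hM hp
  induction n generalizing i with
  | zero =>
    obtain rfl : i = 0 := by simpa using hi
    simp [eC, prodA]
    nlinarith
  | succ n ih =>
    obtain ⟨I, k, hI, hk, rfl⟩ := idx_decomp hM hi
    rcases Nat.lt_or_ge (I + 1) M with hI0 | hI0
    · have h1 : (prodA a n : ℝ) ≤ (prodA a (n + 1) - eC M a x (n + 1) (M ^ n * I + k) : ℤ) := by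
        rw [eC_decomp a x hk]
        have := eC_range hM hx n k hk
        have u := (hx n).inside (I + 1) (by omega) hI0
        have v : x n I + 1 ≤ a n := by
          rcases Nat.eq_zero_or_pos I with rfl | h
          · have := (hx n).zero
            omega
          · exact ((hx n).inside I h hI).2
        have := conv_le (w := a n - 1) (u := x n I) (v := x n (I + 1)) this.1 this.2 (by omega) (by omega)
        have h2 : prodA a n ≤ prodA a (n + 1) -
          (prodA a n * x n I + (x n (I + 1) - x n I) * eC M a x n k) := by
          simp only [prodA]; linarith
        exact_mod_cast h2
      calc _ ≤ ((M : ℝ) ^ p) ^ (n + 1) := natpow_le hp (Nat.sub_le _ _)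
        _ = (M : ℝ) ^ p * ((M : ℝ) ^ p) ^ n := by ring
        _ ≤ (M : ℝ) ^ p * (K * prodA a n) := by gcongr; exact (hK n).1
        _ = K * (M : ℝ) ^ p * prodA a n := by ring
        _ ≤ _ := by gcongr
    · obtain rfl : I = M - 1 := by omega
      have h1 : M ^ (n + 1) - (M ^ n * (M - 1) + k) = M ^ n - k := by
        obtain ⟨m, rfl⟩ : ∃ m, M = m + 1 := ⟨M - 1, by omega⟩
        simp only [Nat.add_sub_cancel]
        rw [pow_succ, mul_add]; omega
      have h2 : prodA a (n + 1) - eC M a x (n + 1) (M ^ n * (M - 1) + k) =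
          prodA a n - eC M a x n k := by
        rw [eC_decomp a x hk, show M - 1 + 1 = M by omega, (hx n).last, (hx n).pred hM, prodA]
        ring
      rw [h1, h2]
      exact ih k hk

lemma eC_upper (hM : 2 ≤ M) (hp : 0 < p) (hx : ∀ n, Coord M (a n) (x n)) (hK : Cmp M a p K)
    (n i : ℕ) (hi : i < M ^ n) : eC M a x n i ≤ K * (M : ℝ) ^ p * (i : ℝ) ^ p := by
  have hK1 := hK.one_le
  have hw := one_le_w hM hp
  induction n generalizing i with
  | zero =>
    obtain rfl : i = 0 := by simpa using hi
    simp [eC, hp.ne']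
  | succ n ih =>
    rcases Nat.lt_or_ge i (M ^ n) with h | h
    · rw [eC_stable hM hx n _ h (n + 1) (by omega)]
      exact ih _ h
    · calc _ ≤ (prodA a (n + 1) : ℝ) := by exact_mod_cast (eC_range hM hx _ _ hi).2
        _ ≤ K * ((M : ℝ) ^ p) ^ (n + 1) := (hK _).2
        _ = K * (M : ℝ) ^ p * ((M : ℝ) ^ p) ^ n := by ring
        _ ≤ _ := by gcongr; exact le_natpow hp h

lemma eC_upper' (hM : 2 ≤ M) (hp : 0 < p) (hx : ∀ n, Coord M (a n) (x n)) (hK : Cmp M a p K)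
    (n i : ℕ) (hi : i < M ^ n) :
    (prodA a n - eC M a x n i : ℤ) ≤ K * (M : ℝ) ^ p * ((M ^ n - i : ℕ) : ℝ) ^ p := by
  have hK1 := hK.one_le
  have hw := one_le_w hM hp
  induction n generalizing i with
  | zero =>
    obtain rfl : i = 0 := by simpa using hi
    simp [eC, prodA]
    nlinarith
  | succ n ih =>
    obtain ⟨I, k, hI, hk, rfl⟩ := idx_decomp hM hi
    rcases Nat.lt_or_ge (I + 1) M with hI0 | hI0
    · have h1 : M ^ n ≤ M ^ (n + 1) - (M ^ n * I + k) := by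
        have : M ^ n * (I + 2) ≤ M ^ n * M := Nat.mul_le_mul_left _ hI0
        rw [mul_add] at this
        rw [pow_succ]; omega
      calc _ ≤ (prodA a (n + 1) : ℝ) := by
            have := (eC_range hM hx _ _ hi).1
            exact_mod_cast (by linarith)
        _ ≤ K * ((M : ℝ) ^ p) ^ (n + 1) := (hK _).2
        _ = K * (M : ℝ) ^ p * ((M : ℝ) ^ p) ^ n := by ring
        _ ≤ _ := by gcongr; exact le_natpow hp h1
    · obtain rfl : I = M - 1 := by omega
      have h1 : M ^ (n + 1) - (M ^ n * (M - 1) + k) = M ^ n - k := by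
        obtain ⟨m, rfl⟩ : ∃ m, M = m + 1 := ⟨M - 1, by omega⟩
        simp only [Nat.add_sub_cancel]
        rw [pow_succ, mul_add]; omega
      have h2 : prodA a (n + 1) - eC M a x (n + 1) (M ^ n * (M - 1) + k) =
          prodA a n - eC M a x n k := by
        rw [eC_decomp a x hk, show M - 1 + 1 = M by omega, (hx n).last, (hx n).pred hM, prodA]
        ring
      rw [h1, h2]
      exact ih k hk

/-- Three cases for two indices. -/
lemma two_idx {M n i j : ℕ} (hM : 2 ≤ M) (hij : i ≤ j) (hj : j < M ^ (n + 1)) :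
    ∃ I k J l, i = M ^ n * I + k ∧ j = M ^ n * J + l ∧ k < M ^ n ∧ l < M ^ n ∧ I < M ∧ J < M ∧
      ((I = J ∧ k ≤ l ∧ j - i = l - k) ∨ (J = I + 1 ∧ j - i = (M ^ n - k) + l) ∨
        (I + 2 ≤ J ∧ M ^ n ≤ j - i)) := by
  obtain ⟨I, k, hI, hk, rfl⟩ := idx_decomp hM (lt_of_le_of_lt hij hj)
  obtain ⟨J, l, hJ, hl, rfl⟩ := idx_decomp hM hj
  refine ⟨I, k, J, l, rfl, rfl, hk, hl, hI, hJ, ?_⟩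
  rcases lt_trichotomy I J with h | rfl | h
  · right
    rcases Nat.lt_or_ge (I + 1) J with h' | h'
    · right
      have : M ^ n * (I + 2) ≤ M ^ n * J := Nat.mul_le_mul_left _ h'
      rw [mul_add] at this
      omega
    · left
      obtain rfl : J = I + 1 := by omega
      rw [mul_add]
      omega
  · left; omega
  · exfalso
    have : M ^ n * (J + 1) ≤ M ^ n * I := Nat.mul_le_mul_left _ h
    rw [mul_add] at this
    omega

lemma step_abs {M : ℕ} {a : ℤ} {x : ℕ → ℤ} (h : Coord M a x) {I : ℕ} (hI : I < M) :
    |x (I + 1) - x I| = 1 := by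
  rcases h.step I hI with h | h <;> rw [h] <;> simp

lemma same_cell (hx : ∀ n, Coord M (a n) (x n)) {n I k l : ℕ} (hI : I < M) (hk : k < M ^ n)
    (hl : l < M ^ n) :
    |eC M a x (n + 1) (M ^ n * I + k) - eC M a x (n + 1) (M ^ n * I + l)| =
      |eC M a x n k - eC M a x n l| := by
  rw [eC_decomp a x hk, eC_decomp a x hl, add_sub_add_left_eq_sub, ← mul_sub, abs_mul,
    step_abs (hx n) hI, one_mul]

lemma eC_holder (hM : 2 ≤ M) (hp : 0 < p) (hx : ∀ n, Coord M (a n) (x n)) (hK : Cmp M a p K)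
    (n i j : ℕ) (hij : i ≤ j) (hj : j < M ^ n) :
    (|eC M a x n i - eC M a x n j| : ℤ) ≤ 2 * (K * (M : ℝ) ^ p) * ((j - i : ℕ) : ℝ) ^ p := by
  have hK1 := hK.one_le
  have hw := one_le_w hM hp
  induction n generalizing i j with
  | zero => simp [eC]; positivity
  | succ n ih =>
    obtain ⟨I, k, J, l, rfl, rfl, hk, hl, hI, hJ, h⟩ := two_idx hM hij hj
    rcases h with ⟨rfl, hkl, h⟩ | ⟨rfl, h⟩ | ⟨hIJ, h⟩
    · rw [h, same_cell hx hI hk hl]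
      exact ih k l hkl hl
    · rw [h]
      have e1 : eC M a x (n + 1) (M ^ n * I + k) - eC M a x (n + 1) (M ^ n * (I + 1) + l) =
        -((x n (I + 1) - x n I) * (prodA a n - eC M a x n k) +
          (x n (I + 1 + 1) - x n (I + 1)) * eC M a x n l) := by
        rw [eC_decomp a x hk, eC_decomp a x hl]; ring
      have r1 := eC_range hM hx n k hk
      have r2 := eC_range hM hx n l hl
      have e2 : |eC M a x (n + 1) (M ^ n * I + k) - eC M a x (n + 1) (M ^ n * (I + 1) + l)| ≤
          (prodA a n - eC M a x n k) + eC M a x n l := by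
        rw [e1, abs_neg]
        refine (abs_add_le _ _).trans ?_
        rw [abs_mul, abs_mul, step_abs (hx n) hI, step_abs (hx n) hJ, one_mul, one_mul,
          abs_of_nonneg (by omega), abs_of_nonneg r2.1]
      have u1 := eC_upper' hM hp hx hK n k hk
      have u2 := eC_upper hM hp hx hK n l hl
      have m1 : ((M ^ n - k : ℕ) : ℝ) ^ p ≤ ((M ^ n - k + l : ℕ) : ℝ) ^ p :=
        Real.rpow_le_rpow (by positivity) (by exact_mod_cast (by omega)) hp.le
      have m2 : (l : ℝ) ^ p ≤ ((M ^ n - k + l : ℕ) : ℝ) ^ p :=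
        Real.rpow_le_rpow (by positivity) (by exact_mod_cast (by omega)) hp.le
      have e3 : ((|eC M a x (n + 1) (M ^ n * I + k) - eC M a x (n + 1) (M ^ n * (I + 1) + l)| : ℤ) : ℝ)
        ≤ (prodA a n - eC M a x n k : ℤ) + (eC M a x n l : ℝ) := by exact_mod_cast e2
      have m3 := mul_le_mul_of_nonneg_left m1 (by positivity : 0 ≤ K * (M : ℝ) ^ p)
      have m4 := mul_le_mul_of_nonneg_left m2 (by positivity : 0 ≤ K * (M : ℝ) ^ p)
      linarith
    · have r1 := eC_range hM hx (n + 1) _ hj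
      have r2 := eC_range hM hx (n + 1) _ (lt_of_le_of_lt hij hj)
      have e1 : |eC M a x (n + 1) (M ^ n * I + k) - eC M a x (n + 1) (M ^ n * J + l)| ≤ prodA a (n + 1) := by
        rw [abs_le]; omega
      calc _ ≤ (prodA a (n + 1) : ℝ) := by exact_mod_cast e1
        _ ≤ K * ((M : ℝ) ^ p) ^ (n + 1) := (hK _).2
        _ = K * (M : ℝ) ^ p * ((M : ℝ) ^ p) ^ n := by ring
        _ ≤ K * (M : ℝ) ^ p * ((M ^ n * J + l - (M ^ n * I + k) : ℕ) : ℝ) ^ p := by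
            gcongr; exact le_natpow hp h
        _ ≤ _ := by
            have : 0 ≤ K * (M : ℝ) ^ p * ((M ^ n * J + l - (M ^ n * I + k) : ℕ) : ℝ) ^ p := by positivity
            linarith

/-- Unflipped junction gives a lower bound. -/
lemma junction (hM : 2 ≤ M) (hp : 0 < p) (hp1 : p ≤ 1) (hx : ∀ n, Coord M (a n) (x n)) (hK : Cmp M a p K)
    {n I k l : ℕ} (hk : k < M ^ n) (hl : l < M ^ n) (hI : I + 1 < M)
    (ht : x n (I + 2) - x n (I + 1) = x n (I + 1) - x n I) :
    ((M ^ n - k + l : ℕ) : ℝ) ^ p ≤ 2 * (K * (M : ℝ) ^ p) *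
      (|eC M a x (n + 1) (M ^ n * I + k) - eC M a x (n + 1) (M ^ n * (I + 1) + l)| : ℤ) := by
  have hK1 := hK.one_le
  have hw := one_le_w hM hp
  have e1 : eC M a x (n + 1) (M ^ n * I + k) - eC M a x (n + 1) (M ^ n * (I + 1) + l) =
        -((x n (I + 1) - x n I) * ((prodA a n - eC M a x n k) + eC M a x n l)) := by
    rw [eC_decomp a x hk, eC_decomp a x hl, show I + 1 + 1 = I + 2 by rfl, ht]; ring
  have r1 := eC_range hM hx n k hk
  have r2 := eC_range hM hx n l hl
  rw [e1, abs_neg, abs_mul, step_abs (hx n) (by omega), one_mul, abs_of_nonneg (by omega)]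
  have u1 := eC_lower' hM hp hx hK n k hk
  have u2 := eC_lower hM hp hx hK n l hl
  have h3 : ((M ^ n - k + l : ℕ) : ℝ) ^ p ≤ ((M ^ n - k : ℕ) : ℝ) ^ p + (l : ℝ) ^ p := by
    rw [Nat.cast_add]
    exact Real.rpow_add_le_add_rpow (by positivity) (by positivity) hp.le hp1
  have : (0 : ℝ) ≤ K * (M : ℝ) ^ p * (((prodA a n - eC M a x n k) + eC M a x n l : ℤ) : ℝ) :=
    mul_nonneg (by positivity) (by exact_mod_cast (by omega))
  push_cast at *
  linarith

lemma sep_cell (hM : 2 ≤ M) (hp : 0 < p) (hx : ∀ n, Coord M (a n) (x n)) (hK : Cmp M a p K)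
    {n I J k l d : ℕ} (hk : k < M ^ n) (hl : l < M ^ n) (hs : SepC (x n) I J) (hd : d ≤ M ^ (n + 1)) :
    (d : ℝ) ^ p ≤ 2 * (K * (M : ℝ) ^ p) *
      (|eC M a x (n + 1) (M ^ n * I + k) - eC M a x (n + 1) (M ^ n * J + l)| : ℤ) := by
  have hK1 := hK.one_le
  have hw := one_le_w hM hp
  have r1 := eC_range hM hx n k hk
  have r2 := eC_range hM hx n l hl
  have key : prodA a n ≤ |eC M a x (n + 1) (M ^ n * I + k) - eC M a x (n + 1) (M ^ n * J + l)| := by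
    rw [eC_decomp a x hk, eC_decomp a x hl]
    rcases hs with ⟨h1, h2, h3, h4⟩ | ⟨h1, h2, h3, h4⟩
    · have c1 := conv_le (w := max (x n I) (x n (I + 1))) r1.1 r1.2 (le_max_left _ _) (le_max_right _ _)
      have c2 := le_conv (w := max (x n I) (x n (I + 1)) + 1) (u := x n J) (v := x n (J + 1)) r2.1 r2.2
        (by omega) (by omega)
      rw [mul_add] at c2
      rw [abs_sub_comm]
      refine le_trans ?_ (le_abs_self _)
      linarith
    · have c1 := conv_le (w := max (x n J) (x n (J + 1))) r2.1 r2.2 (le_max_left _ _) (le_max_right _ _)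
      have c2 := le_conv (w := max (x n J) (x n (J + 1)) + 1) (u := x n I) (v := x n (I + 1)) r1.1 r1.2
        (by omega) (by omega)
      rw [mul_add] at c2
      refine le_trans ?_ (le_abs_self _)
      linarith
  have key' : (prodA a n : ℝ) ≤ (|eC M a x (n + 1) (M ^ n * I + k) - eC M a x (n + 1) (M ^ n * J + l)| : ℤ) := by
    exact_mod_cast key
  have pos : (0 : ℝ) ≤ (prodA a n : ℝ) := by
    have := prodA_pos hM hx n
    exact_mod_cast (by omega)
  calc (d : ℝ) ^ p ≤ ((M : ℝ) ^ p) ^ (n + 1) := natpow_le hp hd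
    _ = (M : ℝ) ^ p * ((M : ℝ) ^ p) ^ n := by ring
    _ ≤ (M : ℝ) ^ p * (K * prodA a n) := by gcongr; exact (hK n).1
    _ = K * (M : ℝ) ^ p * prodA a n := by ring
    _ ≤ 2 * (K * (M : ℝ) ^ p) * prodA a n := by
            have : 0 ≤ K * (M : ℝ) ^ p * prodA a n := by positivity
            linarith
    _ ≤ _ := by gcongr

end one

lemma eC_pair {M : ℕ} {a b : ℕ → ℤ} {x y : ℕ → ℕ → ℤ} {p q K L : ℝ} (hM : 2 ≤ M) (hp : 0 < p)
    (hp1 : p ≤ 1) (hq : 0 < q) (hq1 : q ≤ 1) (hg : ∀ n, Gen M (a n) (b n) (x n) (y n))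
    (hK : Cmp M a p K) (hL : Cmp M b q L) (n i j : ℕ) (hij : i ≤ j) (hj : j < M ^ n) :
    ((j - i : ℕ) : ℝ) ^ p ≤ 2 * (K * (M : ℝ) ^ p) * (|eC M a x n i - eC M a x n j| : ℤ) ∨
    ((j - i : ℕ) : ℝ) ^ q ≤ 2 * (L * (M : ℝ) ^ q) * (|eC M b y n i - eC M b y n j| : ℤ) := by
  have hx := fun n => (hg n).cx
  have hy := fun n => (hg n).cy
  induction n generalizing i j with
  | zero =>
    obtain rfl : j = 0 := by simpa using hj
    simp [eC, hp.ne']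
  | succ n ih =>
    obtain ⟨I, k, J, l, rfl, rfl, hk, hl, hI, hJ, h⟩ := two_idx hM hij hj
    rcases h with ⟨rfl, hkl, h⟩ | ⟨rfl, h⟩ | ⟨hIJ, h⟩
    · rw [h, same_cell hx hI hk hl, same_cell hy hI hk hl]
      exact ih k l hkl hl
    · rw [h]
      rcases (hg n).turn I hJ with ht | ht
      · exact Or.inl (junction hM hp hp1 hx hK hk hl hJ ht)
      · exact Or.inr (junction hM hq hq1 hy hL hk hl hJ ht)
    · rcases (hg n).sep I J hIJ hJ with hs | hs
      · exact Or.inl (sep_cell hM hp hx hK hk hl hs (by omega))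
      · exact Or.inr (sep_cell hM hq hy hL hk hl hs (by omega))

/-- Discrete curve from a sequence of generators. -/
lemma discrete_of_gen {M : ℕ} {a b : ℕ → ℤ} {x y : ℕ → ℕ → ℤ} {p q K L : ℝ} (hM : 2 ≤ M) (hp : 0 < p)
    (hp1 : p ≤ 1) (hq : 0 < q) (hq1 : q ≤ 1) (hg : ∀ n, Gen M (a n) (b n) (x n) (y n))
    (hK : Cmp M a p K) (hL : Cmp M b q L) :
    ∃ (f g : ℕ → ℝ) (C : ℝ), 0 < C ∧ ∀ i j, i ≤ j →
      |f i - f j| ≤ C * ((j : ℝ) - i) ^ p ∧ |g i - g j| ≤ C * ((j : ℝ) - i) ^ q ∧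
      (((j : ℝ) - i) ^ p ≤ C * |f i - f j| ∨ ((j : ℝ) - i) ^ q ≤ C * |g i - g j|) := by
  have hx := fun n => (hg n).cx
  have hy := fun n => (hg n).cy
  have hK1 := hK.one_le
  have hL1 := hL.one_le
  have hw := one_le_w hM hp
  have hz := one_le_w hM hq
  set C1 := 2 * (K * (M : ℝ) ^ p)
  set C2 := 2 * (L * (M : ℝ) ^ q)
  have hC1 : 0 < C1 := by positivity
  have hC2 : 0 < C2 := by positivity
  refine ⟨fun i => eC M a x i i, fun i => eC M b y i i, C1 + C2, by positivity, fun i j hij => ?_⟩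
  have lt1 : ∀ i, i < M ^ i := fun i => Nat.lt_pow_self (by omega)
  beta_reduce
  rw [← eC_stable hM hx i i (lt1 i) j hij, ← eC_stable hM hy i i (lt1 i) j hij]
  have h1 := eC_holder hM hp hx hK j i j hij (lt1 j)
  have h2 := eC_holder hM hq hy hL j i j hij (lt1 j)
  have h3 := eC_pair hM hp hp1 hq hq1 hg hK hL j i j hij (lt1 j)
  push_cast [Nat.cast_sub hij] at h1 h2 h3
  have n0 : (0 : ℝ) ≤ (j : ℝ) - i := sub_nonneg.2 (by exact_mod_cast hij)
  refine ⟨h1.trans ?_, h2.trans ?_, h3.imp (fun h => h.trans ?_) fun h => h.trans ?_⟩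
  all_goals (have := Real.rpow_nonneg n0 p; gcongr; linarith)

lemma Coord.parity {M : ℕ} {a : ℤ} {x : ℕ → ℤ} (h : Coord M a x) (i : ℕ) (hi : i ≤ M) :
    ∃ k : ℤ, x i = 2 * k + (i : ℤ) := by
  induction i with
  | zero => exact ⟨0, by simp [h.zero]⟩
  | succ i ih =>
    obtain ⟨k, hk⟩ := ih (by omega)
    rcases h.step i (by omega) with h' | h'
    · exact ⟨k, by push_cast; omega⟩
    · exact ⟨k - 1, by push_cast; omega⟩

def refine3 (x : ℕ → ℤ) (i : ℕ) : ℤ := 3 * x (i / 3) + (i % 3 : ℕ) * (x (i / 3 + 1) - x (i / 3))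

lemma refine3_0 (x : ℕ → ℤ) (u : ℕ) : refine3 x (3 * u) = 3 * x u := by
  simp [refine3]

lemma refine3_1 (x : ℕ → ℤ) (u : ℕ) : refine3 x (3 * u + 1) = 2 * x u + x (u + 1) := by
  have h1 : (3 * u + 1) / 3 = u := by omega
  have h2 : (3 * u + 1) % 3 = 1 := by omega
  simp only [refine3, h1, h2]; push_cast; ring

lemma refine3_2 (x : ℕ → ℤ) (u : ℕ) : refine3 x (3 * u + 2) = x u + 2 * x (u + 1) := by
  have h1 : (3 * u + 2) / 3 = u := by omega
  have h2 : (3 * u + 2) % 3 = 2 := by omega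
  simp only [refine3, h1, h2]; push_cast; ring

lemma refine3_3 (x : ℕ → ℤ) (u : ℕ) : refine3 x (3 * u + 3) = 3 * x (u + 1) :=
  refine3_0 x (u + 1)

lemma refine3_4 (x : ℕ → ℤ) (u : ℕ) : refine3 x (3 * u + 4) = 2 * x (u + 1) + x (u + 2) :=
  refine3_1 x (u + 1)

lemma three_cases (i : ℕ) : ∃ u, i = 3 * u ∨ i = 3 * u + 1 ∨ i = 3 * u + 2 :=
  ⟨i / 3, by omega⟩

lemma Coord.refine3 {M : ℕ} {a : ℤ} {x : ℕ → ℤ} (h : Coord M a x) (hM : 2 ≤ M) :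
    Coord (3 * M) (3 * a) (refine3 x) where
  zero := by simpa [h.zero] using refine3_0 x 0
  last := by rw [refine3_0, h.last]
  inside := by
    intro i h0 hi
    obtain ⟨u, hu⟩ := three_cases i
    have hs := h.step u (by omega)
    have h1 := h.inside u
    have h2 := h.inside (u + 1)
    have z := h.zero
    have l := h.last
    have z' : u = 0 → x u = 0 := by rintro rfl; exact z
    have l' : u + 1 = M → x (u + 1) = a := by rintro rfl; exact l
    rcases hu with rfl | rfl | rfl
    · rw [refine3_0]; omega
    · rw [refine3_1]; omega
    · rw [refine3_2]; omega
  step := by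
    intro i hi
    obtain ⟨u, hu⟩ := three_cases i
    have hs := h.step u (by omega)
    rcases hu with rfl | rfl | rfl
    · simp only [refine3_0, refine3_1]; omega
    · simp only [refine3_1, refine3_2, add_assoc, Nat.reduceAdd]; omega
    · simp only [refine3_2, refine3_3, add_assoc, Nat.reduceAdd]; omega

lemma sepC_of {x : ℕ → ℤ} {i j : ℕ} (hi : x (i + 1) = x i + 1 ∨ x (i + 1) = x i - 1)
    (hj : x (j + 1) = x j + 1 ∨ x (j + 1) = x j - 1)
    (h : ¬ (-2 ≤ (x i + x (i + 1)) - (x j + x (j + 1)) ∧ (x i + x (i + 1)) - (x j + x (j + 1)) ≤ 2)) :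
    SepC x i j := by
  unfold SepC
  omega

lemma mid {M : ℕ} {a b : ℤ} {x y : ℕ → ℤ} (hx : Coord M a x) (hy : Coord M b y)
    (eqv : ∀ w w', w ≤ M → w' ≤ M → x w = x w' → y w = y w' → w = w') (u w : ℕ) (hu : u + 1 ≤ M)
    (hw : w ≤ M) (h1 : x w = x u ∨ x w = x (u + 1)) (h2 : y w = y u ∨ y w = y (u + 1)) :
    w = u ∨ w = u + 1 := by
  obtain ⟨k1, p1⟩ := hx.parity u (by omega)
  obtain ⟨k2, p2⟩ := hy.parity u (by omega)
  obtain ⟨k3, p3⟩ := hx.parity w (by omega)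
  obtain ⟨k4, p4⟩ := hy.parity w (by omega)
  obtain ⟨k5, p5⟩ := hx.parity (u + 1) (by omega)
  obtain ⟨k6, p6⟩ := hy.parity (u + 1) (by omega)
  rcases h1 with h1 | h1 <;> rcases h2 with h2 | h2
  · exact Or.inl (eqv w u hw (by omega) h1 h2)
  · exfalso; push_cast at p6; omega
  · exfalso; push_cast at p5; omega
  · exact Or.inr (eqv w (u + 1) hw (by omega) h1 h2)

/-- Refining a self avoiding path gives a generator. -/
lemma gen_of_path {M : ℕ} {a b : ℤ} {x y : ℕ → ℤ} (hM : 2 ≤ M) (hx : Coord M a x) (hy : Coord M b y)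
    (hinj : ∀ i j, i < j → j ≤ M → ¬ (x i = x j ∧ y i = y j)) :
    Gen (3 * M) (3 * a) (3 * b) (refine3 x) (refine3 y) where
  cx := (hx.refine3 hM)
  cy := (hy.refine3 hM)
  turn := by
    intro i hi
    obtain ⟨u, hu⟩ := three_cases i
    rcases hu with rfl | rfl | rfl
    · left; rw [refine3_0, refine3_1, refine3_2]; ring
    · left; rw [refine3_1, refine3_2, refine3_3]; ring
    · rw [refine3_2, refine3_3, refine3_4, refine3_2, refine3_3, refine3_4]
      have := hinj u (u + 2) (by omega) (by omega)
      have := hx.step u (by omega)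
      have := hx.step (u + 1) (by omega)
      have := hy.step u (by omega)
      have := hy.step (u + 1) (by omega)
      simp only [show u + 1 + 1 = u + 2 by rfl] at *
      omega
  sep := by
    intro i j hij hj
    by_contra hcon
    rw [not_or] at hcon
    have hX := not_imp_comm.1 (sepC_of ((hx.refine3 hM).step i (by omega)) ((hx.refine3 hM).step j hj)) hcon.1
    have hY := not_imp_comm.1 (sepC_of ((hy.refine3 hM).step i (by omega)) ((hy.refine3 hM).step j hj)) hcon.2
    obtain ⟨u, hu⟩ := three_cases i
    obtain ⟨v, hv⟩ := three_cases j
    have eqv : ∀ w w', w ≤ M → w' ≤ M → x w = x w' → y w = y w' → w = w' := by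
      intro w w' h1 h2 h3 h4
      rcases lt_trichotomy w w' with h | h | h
      · exact absurd ⟨h3, h4⟩ (hinj w w' h h2)
      · exact h
      · exact absurd ⟨h3.symm, h4.symm⟩ (hinj w' w h h1)
    have sxu := hx.step u (by omega)
    have syu := hy.step u (by omega)
    have sxv := hx.step v (by omega)
    have syv := hy.step v (by omega)
    have hu' : u + 1 ≤ M := by omega
    have hv' : v + 1 ≤ M := by omega
    clear hcon hinj
    rcases hu with rfl | rfl | rfl <;> rcases hv with rfl | rfl | rfl <;>
      simp only [refine3_0, refine3_1, refine3_2, refine3_3, add_assoc, Nat.reduceAdd] at hX hY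
    · have := eqv u v (by omega) (by omega) (by clear hY; omega) (by clear hX; omega)
      omega
    · have := mid hx hy eqv v u hv' (by omega) (by clear hY; omega) (by clear hX; omega)
      omega
    · have := eqv u (v + 1) (by omega) (by omega) (by clear hY; omega) (by clear hX; omega)
      omega
    · have := mid hx hy eqv u v hu' (by omega) (by clear hY; omega) (by clear hX; omega)
      obtain rfl : v = u + 1 := by omega
      have := eqv u (u + 1 + 1) (by omega) (by omega) (by clear hY; omega) (by clear hX; omega)
      omega
    · have e1 : x u + x (u + 1) = x v + x (v + 1) := by clear hY; omega
      have e2 : y u + y (u + 1) = y v + y (v + 1) := by clear hX; omega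
      have m1 := mid hx hy eqv u v hu' (by omega) (by clear hX hY; omega) (by clear hX hY; omega)
      have m2 := mid hx hy eqv u (v + 1) hu' (by omega) (by clear hX hY; omega) (by clear hX hY; omega)
      omega
    · have := mid hx hy eqv u (v + 1) hu' (by omega) (by clear hY; omega) (by clear hX; omega)
      omega
    · have := eqv (u + 1) v (by omega) (by omega) (by clear hY; omega) (by clear hX; omega)
      omega
    · have := mid hx hy eqv v (u + 1) hv' (by omega) (by clear hY; omega) (by clear hX; omega)
      obtain rfl : v = u + 1 := by omega
      have := eqv u (u + 1 + 1) (by omega) (by omega) (by clear hY; omega) (by clear hX; omega)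
      omega
    · have := eqv (u + 1) (v + 1) (by omega) (by omega) (by clear hY; omega) (by clear hX; omega)
      omega
section path
variable (R H V Z : ℕ)

def px (i : ℕ) : ℤ :=
  if i = 0 then 0 else
  if i - 1 < 2 * H * R then
    1 + 4 * ((i - 1) / (2 * H) : ℕ) +
      (if (i - 1) % (2 * H) < H then (((i - 1) % (2 * H) % 2 : ℕ) : ℤ)
        else 2 + ((i - 1) % (2 * H) % 2 : ℕ))
  else 1 + 4 * R + (if i - 1 - 2 * H * R < V then (((i - 1 - 2 * H * R) % 2 : ℕ) : ℤ)
    else ((i - 1 - 2 * H * R : ℕ) : ℤ) - V)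

def py (i : ℕ) : ℤ :=
  if i = 0 then 0 else
  if i - 1 < 2 * H * R then
    1 + (if (i - 1) % (2 * H) ≤ H then (((i - 1) % (2 * H) : ℕ) : ℤ)
        else 2 * H - ((i - 1) % (2 * H) : ℕ))
  else 1 + (if i - 1 - 2 * H * R < V then ((i - 1 - 2 * H * R : ℕ) : ℤ)
    else if i - 1 - 2 * H * R < V + Z then V + ((i - 1 - 2 * H * R - V) % 2 : ℕ)
    else ((i - 1 - 2 * H * R : ℕ) : ℤ) - Z)

variable {R H V Z}

lemma snake_lt {r k : ℕ} (hr : r < R) (hk : k < 2 * H) : 2 * H * r + k < 2 * H * R := by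
  have : 2 * H * (r + 1) ≤ 2 * H * R := Nat.mul_le_mul_left _ hr
  rw [mul_add] at this
  omega

lemma px_snake {r k : ℕ} (hr : r < R) (hk : k < 2 * H) :
    px R H V (2 * H * r + k + 1) = 1 + 4 * r + (if k < H then ((k % 2 : ℕ) : ℤ) else 2 + (k % 2 : ℕ)) := by
  have h1 := snake_lt hr hk
  have h2 : (2 * H * r + k) / (2 * H) = r := by
    rw [Nat.mul_add_div (by omega), Nat.div_eq_of_lt hk, add_zero]
  have h3 : (2 * H * r + k) % (2 * H) = k := by
    rw [Nat.mul_add_mod, Nat.mod_eq_of_lt hk]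
  simp only [px, Nat.add_sub_cancel, h2, h3, h1, if_true, Nat.add_eq_zero_iff, one_ne_zero, and_false, if_false]

lemma py_snake {r k : ℕ} (hr : r < R) (hk : k < 2 * H) :
    py R H V Z (2 * H * r + k + 1) = 1 + (if k ≤ H then (k : ℤ) else 2 * H - k) := by
  have h1 := snake_lt hr hk
  have h3 : (2 * H * r + k) % (2 * H) = k := by
    rw [Nat.mul_add_mod, Nat.mod_eq_of_lt hk]
  simp only [py, Nat.add_sub_cancel, h3, h1, if_true, Nat.add_eq_zero_iff, one_ne_zero, and_false, if_false]

lemma px_tail (j : ℕ) : px R H V (2 * H * R + j + 1) =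
    1 + 4 * R + (if j < V then ((j % 2 : ℕ) : ℤ) else (j : ℤ) - V) := by
  have h1 : ¬ (2 * H * R + j < 2 * H * R) := by omega
  simp only [px, Nat.add_sub_cancel, h1, Nat.add_eq_zero_iff, one_ne_zero, and_false, if_false,
    Nat.add_sub_cancel_left]

lemma py_tail (j : ℕ) : py R H V Z (2 * H * R + j + 1) =
    1 + (if j < V then (j : ℤ) else if j < V + Z then V + ((j - V) % 2 : ℕ) else (j : ℤ) - Z) := by
  have h1 : ¬ (2 * H * R + j < 2 * H * R) := by omega
  simp only [py, Nat.add_sub_cancel, h1, Nat.add_eq_zero_iff, one_ne_zero, and_false, if_false,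
    Nat.add_sub_cancel_left]

lemma path_cases (hH : 1 ≤ H) (i : ℕ) : i = 0 ∨ (∃ r k, r < R ∧ k < 2 * H ∧ i = 2 * H * r + k + 1) ∨
    ∃ j, i = 2 * H * R + j + 1 := by
  rcases Nat.eq_zero_or_pos i with h | h
  · exact Or.inl h
  right
  rcases Nat.lt_or_ge (i - 1) (2 * H * R) with h' | h'
  · left
    refine ⟨(i - 1) / (2 * H), (i - 1) % (2 * H), ?_, Nat.mod_lt _ (by omega), ?_⟩
    · rw [Nat.div_lt_iff_lt_mul (by omega), mul_comm]; exact h'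
    · rw [Nat.div_add_mod]; omega
  · right
    exact ⟨i - 1 - 2 * H * R, by omega⟩

lemma path_step (hR : 1 ≤ R) (hH : 1 ≤ H) (hH2 : H % 2 = 0) (hV : V % 2 = 0) (hZ : Z % 2 = 0) (i : ℕ) :
    (px R H V (i + 1) = px R H V i + 1 ∨ px R H V (i + 1) = px R H V i - 1) ∧
    (py R H V Z (i + 1) = py R H V Z i + 1 ∨ py R H V Z (i + 1) = py R H V Z i - 1) := by
  rcases path_cases (R := R) hH i with rfl | ⟨r, k, hr, hk, rfl⟩ | ⟨j, rfl⟩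
  · have h1 := px_snake (V := V) (r := 0) (k := 0) hR (by omega : 0 < 2 * H)
    have h2 := py_snake (V := V) (Z := Z) (r := 0) (k := 0) hR (by omega : 0 < 2 * H)
    simp only [mul_zero, zero_add] at h1 h2
    have h3 : px R H V 0 = 0 := by simp [px]
    have h4 : py R H V Z 0 = 0 := by simp [py]
    rw [zero_add, h1, h2, h3, h4]
    split_ifs <;> simp
    all_goals omega
  · rw [px_snake hr hk, py_snake hr hk]
    rcases Nat.lt_or_ge (k + 1) (2 * H) with h | h
    · rw [show 2 * H * r + k + 1 + 1 = 2 * H * r + (k + 1) + 1 by ring, px_snake hr h, py_snake hr h]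
      constructor <;> split_ifs <;> omega
    · rcases Nat.lt_or_ge (r + 1) R with h' | h'
      · rw [show 2 * H * r + k + 1 + 1 = 2 * H * (r + 1) + 0 + 1 by rw [mul_add]; omega,
          px_snake (k := 0) h' (by omega), py_snake (k := 0) h' (by omega)]
        constructor <;> split_ifs <;> push_cast <;> omega
      · obtain rfl : R = r + 1 := by omega
        rw [show 2 * H * r + k + 1 + 1 = 2 * H * (r + 1) + 0 + 1 by rw [mul_add]; omega,
          px_tail 0, py_tail 0]
        constructor <;> split_ifs <;> push_cast <;> omega
  · rw [show 2 * H * R + j + 1 + 1 = 2 * H * R + (j + 1) + 1 by ring, px_tail, px_tail, py_tail, py_tail]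
    constructor <;> split_ifs <;> omega

lemma path_inj (hH : 1 ≤ H) (i j : ℕ) (h1 : px R H V i = px R H V j)
    (h2 : py R H V Z i = py R H V Z j) : i = j := by
  have h3 : px R H V 0 = 0 := by simp [px]
  rcases path_cases (R := R) hH i with rfl | ⟨r, k, hr, hk, rfl⟩ | ⟨k, rfl⟩ <;>
  rcases path_cases (R := R) hH j with rfl | ⟨r', k', hr', hk', rfl⟩ | ⟨k', rfl⟩
  · rfl
  · rw [px_snake hr' hk', h3] at h1
    split_ifs at h1 <;> omega
  · rw [px_tail, h3] at h1
    split_ifs at h1 <;> omega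
  · rw [px_snake hr hk, h3] at h1
    split_ifs at h1 <;> omega
  · rw [px_snake hr hk, px_snake hr' hk'] at h1
    rw [py_snake hr hk, py_snake hr' hk'] at h2
    obtain rfl : r = r' := by split_ifs at h1 <;> omega
    obtain rfl : k = k' := by split_ifs at h1 h2 <;> omega
    rfl
  · rw [px_snake hr hk, px_tail] at h1
    split_ifs at h1 <;> omega
  · rw [px_tail, h3] at h1
    split_ifs at h1 <;> omega
  · rw [px_snake hr' hk', px_tail] at h1
    split_ifs at h1 <;> omega
  · rw [px_tail, px_tail] at h1
    rw [py_tail, py_tail] at h2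
    obtain rfl : k = k' := by split_ifs at h1 h2 <;> omega
    rfl

lemma path_gen {D a b m : ℕ} (hR : 1 ≤ R) (hH : 1 ≤ H) (hH2 : H % 2 = 0) (hV : V % 2 = 0) (hZ : Z % 2 = 0)
    (hD : 2 ≤ D) (ha : a = 1 + 4 * R + Z + D) (hb : b = 1 + V + D) (hHb : H + 2 ≤ b)
    (hm : m = 1 + 2 * H * R + V + Z + D) :
    ∃ x y, Gen (3 * m) (3 * a) (3 * b) x y := by
  have st := fun i => path_step (V := V) (Z := Z) hR hH hH2 hV hZ i
  have ins : ∀ i, 0 < i → i < m → (1 ≤ px R H V i ∧ px R H V i + 1 ≤ a) ∧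
      (1 ≤ py R H V Z i ∧ py R H V Z i + 1 ≤ b) := by
    intro i h0 hi
    rcases path_cases (R := R) hH i with rfl | ⟨r, k, hr, hk, rfl⟩ | ⟨k, rfl⟩
    · omega
    · rw [px_snake hr hk, py_snake hr hk]
      split_ifs <;> omega
    · rw [px_tail, py_tail]
      split_ifs <;> omega
  have lx : px R H V m = a := by
    rw [show m = 2 * H * R + (V + Z + D) + 1 by omega, px_tail]
    split_ifs <;> omega
  have ly : py R H V Z m = b := by
    rw [show m = 2 * H * R + (V + Z + D) + 1 by omega, py_tail]
    split_ifs <;> omega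
  refine ⟨_, _, gen_of_path (M := m) (x := px R H V) (y := py R H V Z) (by omega)
    ⟨by simp [px], lx, fun i h h' => (ins i h h').1, fun i _ => (st i).1⟩
    ⟨by simp [py], ly, fun i h h' => (ins i h h').2, fun i _ => (st i).2⟩ ?_⟩
  rintro i j hij - ⟨h1, h2⟩
  have := path_inj hH i j h1 h2
  omega

end path

/-- Generators of prescribed size. -/
lemma exists_gen {a0 b0 m : ℕ} (ha : a0 % 2 = 1) (hb : b0 % 2 = 1) (hm : m % 2 = 1) (ha0 : 16 ≤ a0)
    (hab : a0 ≤ b0) (h1 : 16 * m ≤ a0 * (b0 - 2)) (h2 : 2 * b0 + 2 ≤ m) (a b : ℕ)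
    (ha' : a = a0 ∨ a = a0 + 2) (hb' : b = b0 ∨ b = b0 + 2) :
    ∃ x y, Gen (3 * m) (3 * a) (3 * b) x y := by
  obtain ⟨R, hR⟩ : ∃ R, R = a0 / 16 := ⟨_, rfl⟩
  obtain ⟨t, ht⟩ : ∃ t, t = (m - b0 - 2) / (4 * R) := ⟨_, rfl⟩
  have hR1 : 1 ≤ R := by omega
  have e1 := Nat.div_add_mod (m - b0 - 2) (4 * R)
  have e2 := Nat.mod_lt (m - b0 - 2) (by omega : 4 * R > 0)
  rw [← ht] at e1
  have ht1 : 1 ≤ t := by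
    rw [ht, Nat.one_le_div_iff (by omega)]; omega
  set ρ := (m - b0 - 2) % (4 * R)
  have e3 : 2 * (2 * t) * R = 4 * R * t := by ring
  -- bound on the height
  have hH : 2 * t + 2 ≤ b0 := by
    by_contra hcon
    have : b0 - 2 ≤ 2 * t - 1 := by omega
    have h3 : a0 ≤ 32 * R := by omega
    have h4 : a0 * (b0 - 2) ≤ 32 * R * (2 * t - 1) := Nat.mul_le_mul h3 this
    have h5 : 32 * R * (2 * t - 1) ≤ 32 * R * (2 * t) := Nat.mul_le_mul_left _ (by omega)
    have h6 : 32 * R * (2 * t) = 16 * (4 * R * t) := by ring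
    omega
  -- remaining length
  obtain ⟨l, hl⟩ : ∃ l, l = m - 1 - 4 * R * t := ⟨_, rfl⟩
  have hl1 : l = b0 + 1 + ρ := by omega
  have hρ : ρ % 2 = 0 := by
    have : (4 * R * t) % 2 = 0 := by rw [mul_assoc]; omega
    omega
  refine path_gen (R := R) (H := 2 * t) (V := l - (a - 1 - 4 * R)) (Z := l - (b - 1))
    (D := (a - 1 - 4 * R) + (b - 1) - l) hR1 (by omega) (by omega) (by omega) (by omega) (by omega)
    (by omega) (by omega) (by omega) ?_
  rw [e3]
  omega
noncomputable def greedyA (w : ℝ) (α β : ℤ) : ℕ → ℤ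
  | 0 => 1
  | n + 1 => greedyA w α β n * (if (greedyA w α β n : ℝ) ≤ w ^ n then β else α)

lemma exists_cmp {M : ℕ} {p : ℝ} {α β : ℤ} (hα : 0 < α) (h1 : (α : ℝ) ≤ (M : ℝ) ^ p)
    (h2 : (M : ℝ) ^ p ≤ β) :
    ∃ a : ℕ → ℤ, (∀ n, a n = α ∨ a n = β) ∧ ∃ K, Cmp M a p K := by
  set w := (M : ℝ) ^ p with hw
  have hα' : (0 : ℝ) < α := by exact_mod_cast hα
  have hw0 : 0 < w := lt_of_lt_of_le hα' h1
  have hβ' : (0 : ℝ) < β := lt_of_lt_of_le hw0 h2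
  set a : ℕ → ℤ := fun n => if (greedyA w α β n : ℝ) ≤ w ^ n then β else α with ha
  have hP : ∀ n, prodA a n = greedyA w α β n := by
    intro n
    induction n with
    | zero => simp [prodA, greedyA]
    | succ n ih =>
      change prodA a n * a n = _
      rw [ih]; rfl
  have key : ∀ n, 0 < (prodA a n : ℝ) ∧ w ^ n * α ≤ w * prodA a n ∧ prodA a n * w ≤ β * w ^ n := by
    intro n
    induction n with
    | zero => simp [prodA]; exact ⟨h1, h2⟩
    | succ n ih =>
      obtain ⟨i0, i1, i2⟩ := ih
      have hwn : 0 < w ^ n := by positivity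
      by_cases h : (prodA a n : ℝ) ≤ w ^ n
      · have e : prodA a (n + 1) = prodA a n * β := by
          have : a n = β := by rw [ha]; simp only; rw [← hP n, if_pos h]
          rw [prodA, this]
        rw [e]; push_cast
        refine ⟨by positivity, ?_, ?_⟩
        · calc w ^ (n + 1) * α = w * (w ^ n * α) := by ring
            _ ≤ w * (w * prodA a n) := by gcongr
            _ ≤ β * (w * prodA a n) := by gcongr
            _ = _ := by ring
        · calc (prodA a n : ℝ) * β * w ≤ w ^ n * β * w := by gcongr
            _ = _ := by ring
      · have h' := (not_le.1 h).le
        have e : prodA a (n + 1) = prodA a n * α := by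
          have : a n = α := by rw [ha]; simp only; rw [← hP n, if_neg h]
          rw [prodA, this]
        rw [e]; push_cast
        refine ⟨by positivity, ?_, ?_⟩
        · calc w ^ (n + 1) * α = w * (w ^ n * α) := by ring
            _ ≤ w * (prodA a n * α) := by gcongr
        · calc (prodA a n : ℝ) * α * w = α * (prodA a n * w) := by ring
            _ ≤ α * (β * w ^ n) := by gcongr
            _ ≤ w * (β * w ^ n) := by gcongr
            _ = _ := by ring
  refine ⟨a, fun n => ?_, w / α + β / w, fun n => ?_⟩
  · simp only [ha]; split_ifs <;> simp
  · obtain ⟨i0, i1, i2⟩ := key n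
    have hwn : 0 < w ^ n := by positivity
    rw [← hw, add_mul, add_mul]
    have j1 : w ^ n ≤ w / α * prodA a n := by
      rw [div_mul_eq_mul_div, le_div_iff₀ hα']; exact i1
    have j2 : (prodA a n : ℝ) ≤ β / w * w ^ n := by
      rw [div_mul_eq_mul_div, le_div_iff₀ hw0]; exact i2
    have j3 : 0 ≤ β / w * (prodA a n : ℝ) := by positivity
    have j4 : 0 ≤ w / α * w ^ n := by positivity
    constructor <;> linarith

lemma exists_odd (w : ℝ) (hw : 1 ≤ w) : ∃ a : ℕ, a = 2 * ⌊(w - 1) / 2⌋₊ + 1 ∧ a % 2 = 1 ∧ (a : ℝ) ≤ w ∧ w ≤ a + 2 := by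
  refine ⟨_, rfl, by omega, ?_, ?_⟩
  · have := Nat.floor_le (show 0 ≤ (w - 1) / 2 by linarith)
    push_cast; linarith
  · have := Nat.lt_floor_add_one ((w - 1) / 2)
    push_cast; linarith

/-- The discrete curve. -/
lemma discrete_curve {p q : ℝ} (hp : 0 < p) (hpq : p ≤ q) (hq : q < 1) (hs : 1 < p + q) :
    ∃ (f g : ℕ → ℝ) (C : ℝ), 0 < C ∧ ∀ i j, i ≤ j →
      |f i - f j| ≤ C * ((j : ℝ) - i) ^ p ∧ |g i - g j| ≤ C * ((j : ℝ) - i) ^ q ∧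
      (((j : ℝ) - i) ^ p ≤ C * |f i - f j| ∨ ((j : ℝ) - i) ^ q ≤ C * |g i - g j|) := by
  have t : Filter.Tendsto (fun n : ℕ => ((3 * (2 * n + 1) : ℕ) : ℝ)) Filter.atTop Filter.atTop := by
    refine tendsto_natCast_atTop_atTop.comp (Filter.tendsto_atTop_mono (fun n => ?_) Filter.tendsto_id)
    simp only [id]; omega
  have t1 := ((tendsto_rpow_atTop hp).comp t).eventually_ge_atTop 60
  have t2 := ((tendsto_rpow_atTop (by linarith : 0 < p + q - 1)).comp t).eventually_ge_atTop 192
  have t3 := ((tendsto_rpow_atTop (by linarith : 0 < 1 - q)).comp t).eventually_ge_atTop 4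
  obtain ⟨n, h1, h2, h3, hn⟩ := (t1.and (t2.and (t3.and (Filter.eventually_ge_atTop 4)))).exists
  simp only [Function.comp] at h1 h2 h3
  obtain ⟨m, hm⟩ : ∃ m, m = 2 * n + 1 := ⟨_, rfl⟩
  rw [← hm] at h1 h2 h3
  set N : ℝ := ((3 * m : ℕ) : ℝ) with hN
  have hN1 : 1 ≤ N := by rw [hN]; exact_mod_cast (by omega)
  have hN0 : 0 < N := by linarith
  set w := N ^ p with hw
  set z := N ^ q with hz
  have hwz : w ≤ z := Real.rpow_le_rpow_of_exponent_le hN1 hpq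
  have hprod : 192 * N ≤ w * z := by
    have : w * z = N ^ (p + q - 1) * N := by
      rw [hw, hz, ← Real.rpow_add hN0, ← Real.rpow_add_one hN0.ne']; congr 1; ring
    rw [this]; gcongr
  have hzN : 4 * z ≤ N := by
    have : N = N ^ (1 - q) * z := by
      rw [hz, ← Real.rpow_add hN0, sub_add_cancel, Real.rpow_one]
    calc 4 * z ≤ N ^ (1 - q) * z := by gcongr
      _ = N := this.symm
  obtain ⟨a0, ea, oa, a1, a2⟩ := exists_odd (w / 3) (by linarith)
  obtain ⟨b0, eb, ob, b1, b2⟩ := exists_odd (z / 3) (by linarith)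
  have hab : a0 ≤ b0 := by
    rw [ea, eb]
    have : ⌊(w / 3 - 1) / 2⌋₊ ≤ ⌊(z / 3 - 1) / 2⌋₊ := Nat.floor_le_floor (by linarith)
    omega
  have ha16 : 16 ≤ a0 := by
    have : (16 : ℝ) ≤ a0 := by linarith
    exact_mod_cast this
  have g1 : 16 * m ≤ a0 * (b0 - 2) := by
    have e : ((b0 - 2 : ℕ) : ℝ) = b0 - 2 := by rw [Nat.cast_sub (by omega)]; norm_num
    have u1 : w / 6 ≤ a0 := by linarith
    have u2 : z / 6 ≤ ((b0 - 2 : ℕ) : ℝ) := by rw [e]; linarith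
    have u3 : w / 6 * (z / 6) ≤ a0 * ((b0 - 2 : ℕ) : ℝ) := by
      have : 0 ≤ z / 6 := by linarith
      gcongr
    have u4 : N = 3 * m := by rw [hN]; push_cast; ring
    have : ((16 * m : ℕ) : ℝ) ≤ ((a0 * (b0 - 2) : ℕ) : ℝ) := by
      push_cast only [Nat.cast_mul]
      have : (16 : ℝ) * m = 16 * N / 3 := by rw [u4]; ring
      rw [show ((16 : ℕ) : ℝ) = 16 by norm_num, this]
      linarith
    exact_mod_cast this
  have g2 : 2 * b0 + 2 ≤ m := by
    have u4 : N = 3 * m := by rw [hN]; push_cast; ring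
    have u5 : (4 : ℝ) ≤ m := by exact_mod_cast (by omega)
    have : ((2 * b0 + 2 : ℕ) : ℝ) ≤ m := by push_cast; linarith
    exact_mod_cast this
  obtain ⟨a, ha, K, hK⟩ := exists_cmp (M := 3 * m) (p := p) (α := 3 * a0) (β := 3 * (a0 + 2 : ℕ)) (by omega)
    (by rw [← hN, ← hw]; push_cast; linarith) (by rw [← hN, ← hw]; push_cast; linarith)
  obtain ⟨b, hb, L, hL⟩ := exists_cmp (M := 3 * m) (p := q) (α := 3 * b0) (β := 3 * (b0 + 2 : ℕ)) (by omega)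
    (by rw [← hN, ← hz]; push_cast; linarith) (by rw [← hN, ← hz]; push_cast; linarith)
  have hg : ∀ n, ∃ x y, Gen (3 * m) (a n) (b n) x y := by
    intro n
    rcases ha n with h | h <;> rcases hb n with h' | h' <;> rw [h, h'] <;>
      exact exists_gen oa ob (by omega) ha16 hab g1 g2 _ _ (by simp) (by simp)
  choose x y hxy using hg
  exact discrete_of_gen (by omega) hp (by linarith) (by linarith) hq.le hxy hK hL

/-- The sampling index at scale `n`. -/
noncomputable def smp (n : ℕ) (t : ℝ) : ℕ := ⌊(n : ℝ) * t + (n : ℝ) ^ 2⌋₊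

lemma smp_tendsto (t : ℝ) :
    Filter.Tendsto (fun n : ℕ => ((smp n t : ℝ) - (n : ℝ) ^ 2) / n) Filter.atTop (nhds t) := by
  rw [tendsto_iff_dist_tendsto_zero]
  have h1 : Filter.Tendsto (fun n : ℕ => 1 / (n : ℝ)) Filter.atTop (nhds 0) :=
    tendsto_one_div_atTop_nhds_zero_nat
  refine squeeze_zero' (Filter.Eventually.of_forall fun n => dist_nonneg) ?_ h1
  obtain ⟨M, hM⟩ := exists_nat_ge (|t| + 1)
  filter_upwards [Filter.eventually_ge_atTop M] with n hn
  have hn' : |t| + 1 ≤ (n : ℝ) := hM.trans (by exact_mod_cast hn)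
  have hnp : (0 : ℝ) < n := by linarith [abs_nonneg t]
  have hnn : 0 ≤ (n : ℝ) * t + (n : ℝ) ^ 2 := by
    have : -(n : ℝ) ≤ t := by linarith [neg_abs_le t]
    nlinarith
  have ha := Nat.floor_le hnn
  have hb := Nat.lt_floor_add_one ((n : ℝ) * t + (n : ℝ) ^ 2)
  rw [Real.dist_eq]
  have : ((smp n t : ℝ) - (n : ℝ) ^ 2) / n - t
      = ((smp n t : ℝ) - (n * t + (n : ℝ) ^ 2)) / n := by
    field_simp
    ring
  rw [this, abs_div, abs_of_pos hnp]
  apply div_le_div_of_nonneg_right _ hnp.le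
  rw [abs_le]
  unfold smp
  constructor <;> linarith

lemma smp_diff_tendsto (s t : ℝ) :
    Filter.Tendsto (fun n : ℕ => |(smp n s : ℝ) - smp n t| / n) Filter.atTop (nhds |s - t|) := by
  have := ((smp_tendsto s).sub (smp_tendsto t)).abs
  refine this.congr fun n => ?_
  rw [← sub_div, abs_div, Nat.abs_cast]
  congr 2
  ring

lemma ultra_limit {C p : ℝ} (hp : 0 < p) (f : ℕ → ℝ)
    (hf : ∀ i j : ℕ, |f i - f j| ≤ C * |(i : ℝ) - j| ^ p) :
    ∃ h : ℝ → ℝ, ∀ t, Filter.Tendsto (fun n : ℕ => (f (smp n t) - f (smp n 0)) / (n : ℝ) ^ p)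
      (Filter.hyperfilter ℕ : Filter ℕ) (nhds (h t)) := by
  have hle : (Filter.hyperfilter ℕ : Filter ℕ) ≤ Filter.atTop := by
    rw [← Nat.cofinite_eq_atTop]; exact Filter.hyperfilter_le_cofinite
  have key : ∀ t, ∃ y, Filter.Tendsto
      (fun n : ℕ => (f (smp n t) - f (smp n 0)) / (n : ℝ) ^ p)
      (Filter.hyperfilter ℕ : Filter ℕ) (nhds y) := by
    intro t
    set φ : ℕ → ℝ := fun n : ℕ => (f (smp n t) - f (smp n 0)) / (n : ℝ) ^ p with hφ
    have h1 : Filter.Tendsto (fun n : ℕ => C * (|(smp n t : ℝ) - smp n 0| / n) ^ p)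
        Filter.atTop (nhds (C * |t - 0| ^ p)) :=
      ((smp_diff_tendsto t 0).rpow_const (Or.inr hp.le)).const_mul C
    have h2 : ∀ᶠ n in Filter.atTop, φ n ∈ Metric.closedBall (0 : ℝ) (C * |t - 0| ^ p + 1) := by
      filter_upwards [h1.eventually_lt_const (lt_add_one _), Filter.eventually_gt_atTop 0]
        with n hn hn0
      have hn0' : (0 : ℝ) < n := by exact_mod_cast hn0
      rw [mem_closedBall_zero_iff, Real.norm_eq_abs, hφ]
      refine le_trans ?_ hn.le
      have hnp : 0 < (n : ℝ) ^ p := Real.rpow_pos_of_pos hn0' p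
      simp only []
      rw [abs_div, abs_of_pos hnp, Real.div_rpow (abs_nonneg _) hn0'.le, ← mul_div_assoc]
      exact div_le_div_of_nonneg_right (hf _ _) hnp.le
    obtain ⟨y, -, hy⟩ := (isCompact_closedBall (0 : ℝ) (C * |t - 0| ^ p + 1)).ultrafilter_le_nhds'
      ((Filter.hyperfilter ℕ).map φ) (hle h2)
    exact ⟨y, hy⟩
  choose h hh using key
  exact ⟨h, hh⟩

lemma ultra_diff {p : ℝ} {f : ℕ → ℝ} {h : ℝ → ℝ}
    (hh : ∀ t, Filter.Tendsto (fun n : ℕ => (f (smp n t) - f (smp n 0)) / (n : ℝ) ^ p)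
      (Filter.hyperfilter ℕ : Filter ℕ) (nhds (h t))) (s t : ℝ) :
    Filter.Tendsto (fun n : ℕ => |f (smp n s) - f (smp n t)| / (n : ℝ) ^ p)
      (Filter.hyperfilter ℕ : Filter ℕ) (nhds |h s - h t|) := by
  refine (((hh s).sub (hh t)).abs).congr fun n => ?_
  rw [← sub_div, abs_div, abs_of_nonneg (Real.rpow_nonneg (Nat.cast_nonneg n) p)]
  congr 2
  ring

lemma continuous_curve {p q : ℝ} (hp : 0 < p) (hpq : p ≤ q) (hq : q < 1) (hs : 1 < p + q) :
    ∃ (h₁ h₂ : ℝ → ℝ) (C : ℝ), 0 < C ∧ ∀ s t : ℝ,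
      |h₁ s - h₁ t| ≤ C * |s - t| ^ p ∧ |h₂ s - h₂ t| ≤ C * |s - t| ^ q ∧
      (|s - t| ^ p ≤ C * |h₁ s - h₁ t| ∨ |s - t| ^ q ≤ C * |h₂ s - h₂ t|) := by
  obtain ⟨f, g, C, hC, H⟩ := discrete_curve hp hpq hq hs
  have hq0 : 0 < q := hp.trans_le hpq
  have H2 : ∀ i j : ℕ, |f i - f j| ≤ C * |(i : ℝ) - j| ^ p ∧ |g i - g j| ≤ C * |(i : ℝ) - j| ^ q ∧
      (|(i : ℝ) - j| ^ p ≤ C * |f i - f j| ∨ |(i : ℝ) - j| ^ q ≤ C * |g i - g j|) := by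
    intro i j
    rcases le_total i j with hij | hij
    · have h1 : (i : ℝ) ≤ j := by exact_mod_cast hij
      rw [abs_sub_comm (i : ℝ) j, abs_of_nonneg (by linarith : (0 : ℝ) ≤ (j : ℝ) - i)]
      exact H i j hij
    · have h1 : (j : ℝ) ≤ i := by exact_mod_cast hij
      rw [abs_of_nonneg (by linarith : (0 : ℝ) ≤ (i : ℝ) - j), abs_sub_comm (f i), abs_sub_comm (g i)]
      exact H j i hij
  have hle : (Filter.hyperfilter ℕ : Filter ℕ) ≤ Filter.atTop := by
    rw [← Nat.cofinite_eq_atTop]; exact Filter.hyperfilter_le_cofinite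
  obtain ⟨h₁, hh₁⟩ := ultra_limit hp f fun i j => (H2 i j).1
  obtain ⟨h₂, hh₂⟩ := ultra_limit hq0 g fun i j => (H2 i j).2.1
  refine ⟨h₁, h₂, C, hC, fun s t => ?_⟩
  have D₁ := ultra_diff hh₁ s t
  have D₂ := ultra_diff hh₂ s t
  have A : ∀ r : ℝ, 0 < r → Filter.Tendsto
      (fun n : ℕ => (|(smp n s : ℝ) - smp n t| / n) ^ r)
      (Filter.hyperfilter ℕ : Filter ℕ) (nhds (|s - t| ^ r)) := fun r hr =>
    ((smp_diff_tendsto s t).mono_left hle).rpow_const (Or.inr hr.le)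
  have hpos : ∀ᶠ n : ℕ in (Filter.hyperfilter ℕ : Filter ℕ), 0 < n :=
    hle (Filter.eventually_gt_atTop 0)
  have up : ∀ (n : ℕ) (r x y : ℝ), 0 < n → x ≤ C * |(smp n s : ℝ) - smp n t| ^ r →
      x / (n : ℝ) ^ r ≤ C * (|(smp n s : ℝ) - smp n t| / n) ^ r := by
    intro n r x y hn hx
    have hn0 : (0 : ℝ) < n := by exact_mod_cast hn
    rw [Real.div_rpow (abs_nonneg _) hn0.le, ← mul_div_assoc]
    exact div_le_div_of_nonneg_right hx (Real.rpow_pos_of_pos hn0 r).le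
  have dn : ∀ (n : ℕ) (r x : ℝ), 0 < n → |(smp n s : ℝ) - smp n t| ^ r ≤ C * x →
      (|(smp n s : ℝ) - smp n t| / n) ^ r ≤ C * (x / (n : ℝ) ^ r) := by
    intro n r x hn hx
    have hn0 : (0 : ℝ) < n := by exact_mod_cast hn
    rw [Real.div_rpow (abs_nonneg _) hn0.le, ← mul_div_assoc]
    exact div_le_div_of_nonneg_right hx (Real.rpow_pos_of_pos hn0 r).le
  refine ⟨?_, ?_, ?_⟩
  · refine le_of_tendsto_of_tendsto D₁ ((A p hp).const_mul C) ?_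
    filter_upwards [hpos] with n hn
    exact up n p _ 0 hn (H2 _ _).1
  · refine le_of_tendsto_of_tendsto D₂ ((A q hq0).const_mul C) ?_
    filter_upwards [hpos] with n hn
    exact up n q _ 0 hn (H2 _ _).2.1
  · have hor : ∀ᶠ n : ℕ in (Filter.hyperfilter ℕ : Filter ℕ),
        (|(smp n s : ℝ) - smp n t| ^ p ≤ C * |f (smp n s) - f (smp n t)| ∨
        |(smp n s : ℝ) - smp n t| ^ q ≤ C * |g (smp n s) - g (smp n t)|) :=
      Filter.Eventually.of_forall fun n => (H2 _ _).2.2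
    rcases Ultrafilter.eventually_or.1 hor with h | h
    · left
      refine le_of_tendsto_of_tendsto (A p hp) (D₁.const_mul C) ?_
      filter_upwards [hpos, h] with n hn h
      exact dn n p _ hn h
    · right
      refine le_of_tendsto_of_tendsto (A q hq0) (D₂.const_mul C) ?_
      filter_upwards [hpos, h] with n hn h
      exact dn n q _ hn h

lemma snow_embed : ∀ d : ℕ, ∀ ε : ℝ, 1 / ((d : ℝ) + 2) < ε → ε < 1 →
    ∃ (g : ℝ → EuclideanSpace ℝ (Fin (d + 2))) (C : ℝ), 0 < C ∧ ∀ s t : ℝ,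
      ‖g s - g t‖ ≤ C * |s - t| ^ ε ∧ |s - t| ^ ε ≤ C * ‖g s - g t‖ := by
  -- the inductive step, packaged
  have step : ∀ (d : ℕ) (ε δ : ℝ), 0 < ε → ε < δ → δ ≤ 1 → δ * (1 - ε) < ε →
      (∃ (g : ℝ → EuclideanSpace ℝ (Fin d)) (C : ℝ), 0 < C ∧ ∀ s t : ℝ,
        ‖g s - g t‖ ≤ C * |s - t| ^ δ ∧ |s - t| ^ δ ≤ C * ‖g s - g t‖) →
      ∃ (g : ℝ → EuclideanSpace ℝ (Fin (d + 1))) (C : ℝ), 0 < C ∧ ∀ s t : ℝ,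
        ‖g s - g t‖ ≤ C * |s - t| ^ ε ∧ |s - t| ^ ε ≤ C * ‖g s - g t‖ := by
    intro d ε δ hε hεδ hδ hlt ⟨g, K, hK, hg⟩
    have hδ0 : 0 < δ := hε.trans hεδ
    have hpq : ε ≤ ε / δ := by rw [le_div_iff₀ hδ0]; nlinarith
    have hq : ε / δ < 1 := by rw [div_lt_one hδ0]; exact hεδ
    have hs : 1 < ε + ε / δ := by
      have : 1 - ε < ε / δ := by rw [lt_div_iff₀ hδ0]; linarith
      linarith
    obtain ⟨h₁, h₂, C, hC, H⟩ := continuous_curve hε hpq hq hs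
    have hn : ∀ s t : ℝ, ‖(WithLp.toLp 2 (Fin.cons (h₁ s) (g (h₂ s)).ofLp : Fin (d + 1) → ℝ) :
        EuclideanSpace ℝ (Fin (d + 1))) - WithLp.toLp 2 (Fin.cons (h₁ t) (g (h₂ t)).ofLp)‖ ^ 2
        = |h₁ s - h₁ t| ^ 2 + ‖g (h₂ s) - g (h₂ t)‖ ^ 2 := by
      intro s t
      rw [EuclideanSpace.norm_sq_eq, EuclideanSpace.norm_sq_eq, Fin.sum_univ_succ]
      simp
    have hpw : ∀ x : ℝ, 0 ≤ x → (x ^ (ε / δ)) ^ δ = x ^ ε := by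
      intro x hx
      rw [← Real.rpow_mul hx, div_mul_cancel₀ _ hδ0.ne']
    have hCd : 0 < C ^ δ := Real.rpow_pos_of_pos hC δ
    refine ⟨fun t => WithLp.toLp 2 (Fin.cons (h₁ t) (g (h₂ t)).ofLp : Fin (d + 1) → ℝ),
      C + C ^ δ * K, by positivity, fun s t => ?_⟩
    have hn' := hn s t
    obtain ⟨a1, a2, a3⟩ := H s t
    obtain ⟨b1, b2⟩ := hg (h₂ s) (h₂ t)
    set W := ‖(WithLp.toLp 2 (Fin.cons (h₁ s) (g (h₂ s)).ofLp : Fin (d + 1) → ℝ) :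
        EuclideanSpace ℝ (Fin (d + 1))) - WithLp.toLp 2 (Fin.cons (h₁ t) (g (h₂ t)).ofLp)‖ with hW
    have hW0 : 0 ≤ W := norm_nonneg _
    set X := |h₁ s - h₁ t| with hX
    set Y := ‖g (h₂ s) - g (h₂ t)‖ with hY
    have hX0 : 0 ≤ X := abs_nonneg _
    have hY0 : 0 ≤ Y := norm_nonneg _
    have hXW : X ≤ W := by nlinarith [sq_nonneg Y]
    have hYW : Y ≤ W := by nlinarith [sq_nonneg X]
    have hWXY : W ≤ X + Y := by
      by_contra hcon
      push Not at hcon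
      nlinarith [mul_nonneg hX0 hY0]
    have hst : 0 ≤ |s - t| ^ ε := Real.rpow_nonneg (abs_nonneg _) _
    have e1 : |h₂ s - h₂ t| ^ δ ≤ C ^ δ * |s - t| ^ ε := by
      have := Real.rpow_le_rpow (abs_nonneg _) a2 hδ0.le
      rwa [Real.mul_rpow hC.le (Real.rpow_nonneg (abs_nonneg _) _), hpw _ (abs_nonneg _)] at this
    change W ≤ _ ∧ _ ≤ _ * W
    constructor
    · calc W ≤ X + Y := hWXY
        _ ≤ C * |s - t| ^ ε + K * (C ^ δ * |s - t| ^ ε) :=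
          add_le_add a1 (b1.trans (mul_le_mul_of_nonneg_left e1 hK.le))
        _ = _ := by ring
    · rcases a3 with a3 | a3
      · have : C * X ≤ C * W := mul_le_mul_of_nonneg_left hXW hC.le
        have : 0 ≤ C ^ δ * K * W := by positivity
        nlinarith
      · have := Real.rpow_le_rpow (Real.rpow_nonneg (abs_nonneg _) _) a3 hδ0.le
        rw [Real.mul_rpow hC.le (abs_nonneg _), hpw _ (abs_nonneg _)] at this
        have h2 : C ^ δ * |h₂ s - h₂ t| ^ δ ≤ C ^ δ * (K * W) :=
          mul_le_mul_of_nonneg_left (b2.trans (mul_le_mul_of_nonneg_left hYW hK.le)) hCd.le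
        have : 0 ≤ C * W := by positivity
        nlinarith
  intro d
  induction d with
  | zero =>
    intro ε h1 h2
    norm_num at h1
    refine step 1 ε 1 (by linarith) h2 le_rfl (by linarith) ?_
    refine ⟨fun t => WithLp.toLp 2 (fun _ => t), 1, one_pos, fun s t => ?_⟩
    have : ‖(WithLp.toLp 2 (fun _ => s) : EuclideanSpace ℝ (Fin 1)) - WithLp.toLp 2 (fun _ => t)‖
        = |s - t| := by
      rw [EuclideanSpace.norm_eq]
      simp [Real.sqrt_sq_eq_abs]
    simp only [this, Real.rpow_one, one_mul, le_refl, and_self]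
  | succ d ih =>
    intro ε h1 h2
    push_cast at h1
    have hd : (0 : ℝ) ≤ d := Nat.cast_nonneg d
    have hε0 : 0 < ε := lt_trans (by positivity) h1
    have h3 : 1 < ε * ((d : ℝ) + 1 + 2) := by rwa [div_lt_iff₀ (by linarith)] at h1
    have hlt : max ε (1 / ((d : ℝ) + 2)) < min 1 (ε / (1 - ε)) := by
      have h1ε : 0 < 1 - ε := by linarith
      rw [max_lt_iff, lt_min_iff, lt_min_iff]
      refine ⟨⟨h2, ?_⟩, ?_, ?_⟩
      · rw [lt_div_iff₀ h1ε]; nlinarith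
      · rw [div_lt_one (by linarith)]; linarith
      · rw [div_lt_div_iff₀ (by linarith) h1ε]; nlinarith
    obtain ⟨δ, hδ1, hδ2⟩ := exists_between hlt
    rw [max_lt_iff] at hδ1
    rw [lt_min_iff] at hδ2
    refine step (d + 2) ε δ hε0 hδ1.1 hδ2.1.le ?_ (ih δ hδ1.2 hδ2.1)
    have := hδ2.2
    rwa [lt_div_iff₀ (by linarith)] at this

lemma conj2 (N : ℕ) (α : ℝ) (hα : α ∈ Set.Ico (N : ℝ) (N + 1)) (hα0 : 0 < α) :
    ∃ (f : ℝ → EuclideanSpace ℝ (Fin (N + 2))) (L : ℝ), 1 ≤ L ∧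
        ∀ s t : ℝ, L⁻¹ * |s - t| ^ (1 / (1 + α)) ≤ ‖f s - f t‖ ∧
          ‖f s - f t‖ ≤ L * |s - t| ^ (1 / (1 + α)) := by
  obtain ⟨g, C, hC, hg⟩ := snow_embed N (1 / (1 + α))
    (one_div_lt_one_div_of_lt (by linarith) (by linarith [hα.2]))
    (by rw [div_lt_one (by linarith)]; linarith)
  refine ⟨g, max 1 C, le_max_left _ _, fun s t => ?_⟩
  have h0 : 0 ≤ |s - t| ^ (1 / (1 + α)) := Real.rpow_nonneg (abs_nonneg _) _
  have hL : 0 < max 1 C := lt_of_lt_of_le one_pos (le_max_left _ _)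
  constructor
  · rw [inv_mul_le_iff₀ hL]
    exact (hg s t).2.trans (mul_le_mul_of_nonneg_right (le_max_right _ _) (norm_nonneg _))
  · exact (hg s t).1.trans (mul_le_mul_of_nonneg_right (le_max_right _ _) h0)

/-- Two-sided snowflake estimate. -/
def SnowBd {n : ℕ} (α : ℝ) (f : ℝ → EuclideanSpace ℝ (Fin n)) (L : ℝ) : Prop :=
  ∀ s t : ℝ, L⁻¹ * |s - t| ^ (1 / (1 + α)) ≤ ‖f s - f t‖ ∧
    ‖f s - f t‖ ≤ L * |s - t| ^ (1 / (1 + α))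

lemma SnowBd.inv_le {n : ℕ} {α L : ℝ} {f : ℝ → EuclideanSpace ℝ (Fin n)} (hα0 : 0 < α)
    (hL : 1 ≤ L) (H : SnowBd α f L) (s t : ℝ) :
    |s - t| ≤ L ^ (1 + α) * ‖f s - f t‖ ^ (1 + α) := by
  have hL0 : 0 < L := by linarith
  have h1 : |s - t| ^ (1 / (1 + α)) ≤ L * ‖f s - f t‖ := by
    have := (H s t).1
    rwa [inv_mul_le_iff₀ hL0] at this
  have h2 := Real.rpow_le_rpow (Real.rpow_nonneg (abs_nonneg _) _) h1
    (by linarith : 0 ≤ 1 + α)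
  rwa [← Real.rpow_mul (abs_nonneg _), one_div_mul_cancel (by linarith), Real.rpow_one,
    Real.mul_rpow hL0.le (norm_nonneg _)] at h2

lemma SnowBd.injective {n : ℕ} {α L : ℝ} {f : ℝ → EuclideanSpace ℝ (Fin n)} (hα0 : 0 < α)
    (hL : 1 ≤ L) (H : SnowBd α f L) : Function.Injective f := by
  intro s t hst
  have := H.inv_le hα0 hL s t
  rw [hst, sub_self, norm_zero, Real.zero_rpow (by linarith), mul_zero] at this
  exact sub_eq_zero.1 (abs_nonpos_iff.1 this)

lemma SnowBd.holder {n : ℕ} {α L : ℝ} {f : ℝ → EuclideanSpace ℝ (Fin n)} (hα0 : 0 < α)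
    (hL : 1 ≤ L) (H : SnowBd α f L) :
    HolderWith L.toNNReal (1 / (1 + α)).toNNReal f := by
  have hL0 : 0 < L := by linarith
  have he : 0 < 1 / (1 + α) := by positivity
  intro s t
  rw [Real.coe_toNNReal _ he.le, edist_dist, edist_dist, ENNReal.ofReal_rpow_of_nonneg dist_nonneg he.le]
  change _ ≤ ENNReal.ofReal L * _
  rw [← ENNReal.ofReal_mul hL0.le, dist_eq_norm, Real.dist_eq]
  exact ENNReal.ofReal_le_ofReal (H s t).2

lemma SnowBd.continuous {n : ℕ} {α L : ℝ} {f : ℝ → EuclideanSpace ℝ (Fin n)} (hα0 : 0 < α)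
    (hL : 1 ≤ L) (H : SnowBd α f L) : Continuous f :=
  (H.holder hα0 hL).continuous (by
    have he : 0 < 1 / (1 + α) := by positivity
    simpa using he)

lemma SnowBd.inv_holder {n : ℕ} {α L : ℝ} {f : ℝ → EuclideanSpace ℝ (Fin n)} (hα0 : 0 < α)
    (hL : 1 ≤ L) (H : SnowBd α f L) :
    HolderOnWith (L ^ (1 + α)).toNNReal (1 + α).toNNReal (Function.invFun f) (Set.range f) := by
  have hL0 : 0 < L := by linarith
  have hinj := H.injective hα0 hL
  have he : 0 < 1 + α := by positivity
  rintro _ ⟨s, rfl⟩ _ ⟨t, rfl⟩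
  rw [Function.leftInverse_invFun hinj s, Function.leftInverse_invFun hinj t,
    Real.coe_toNNReal _ he.le, edist_dist, edist_dist,
    ENNReal.ofReal_rpow_of_nonneg dist_nonneg he.le]
  change _ ≤ ENNReal.ofReal (L ^ (1 + α)) * _
  rw [← ENNReal.ofReal_mul (Real.rpow_nonneg hL0.le _), dist_eq_norm (f s), Real.dist_eq]
  exact ENNReal.ofReal_le_ofReal (H.inv_le hα0 hL s t)

lemma SnowBd.inv_image {n : ℕ} {α L : ℝ} {f : ℝ → EuclideanSpace ℝ (Fin n)} (hα0 : 0 < α)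
    (hL : 1 ≤ L) (H : SnowBd α f L) : Function.invFun f '' Set.range f = Set.univ := by
  have hinj := H.injective hα0 hL
  ext t
  simp only [Set.mem_image, Set.mem_range, exists_exists_eq_and, Set.mem_univ, iff_true]
  exact ⟨t, Function.leftInverse_invFun hinj t⟩

lemma SnowBd.le_dimH {n : ℕ} {α L : ℝ} {f : ℝ → EuclideanSpace ℝ (Fin n)} (hα0 : 0 < α)
    (hL : 1 ≤ L) (H : SnowBd α f L) : ENNReal.ofReal (1 + α) ≤ dimH (Set.range f) := by
  have h := (H.inv_holder hα0 hL).dimH_image_le (by simp; linarith)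
  rw [H.inv_image hα0 hL, Real.dimH_univ, ENNReal.le_div_iff_mul_le, one_mul] at h
  · exact h
  · left
    simp only [ne_eq, ENNReal.coe_eq_zero, Real.toNNReal_eq_zero]
    linarith
  · left; exact ENNReal.coe_ne_top

lemma SnowBd.dimH_le {n : ℕ} {α L : ℝ} {f : ℝ → EuclideanSpace ℝ (Fin n)} (hα0 : 0 < α)
    (hL : 1 ≤ L) (H : SnowBd α f L) : dimH (Set.range f) ≤ ENNReal.ofReal (1 + α) := by
  have he : 0 < 1 / (1 + α) := by positivity
  have h := (H.holder hα0 hL).dimH_range_le (by simpa using he)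
  rw [Real.dimH_univ] at h
  refine h.trans (le_of_eq ?_)
  change 1 / ENNReal.ofReal (1 / (1 + α)) = _
  rw [one_div, one_div, ENNReal.ofReal_inv_of_pos (by linarith), inv_inv]

lemma SnowBd.reach {n : ℕ} {α L : ℝ} {f : ℝ → EuclideanSpace ℝ (Fin n)} (hα0 : 0 < α)
    (hL : 1 ≤ L) (H : SnowBd α f L) (t₀ σ R : ℝ) (hσ : |σ| = 1) (hR : 0 < R) :
    ∃ u, 0 < u ∧ ‖f (t₀ + σ * u) - f t₀‖ = R := by
  have hL0 : 0 < L := by linarith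
  have hc := H.continuous hα0 hL
  set T : ℝ := (L * R) ^ (1 + α) with hT
  have hT0 : 0 ≤ T := by positivity
  have hTe : L⁻¹ * |T| ^ (1 / (1 + α)) = R := by
    rw [abs_of_nonneg hT0, hT, ← Real.rpow_mul (by positivity), mul_one_div_cancel (by linarith),
      Real.rpow_one]
    field_simp
  have hcont : ContinuousOn (fun u : ℝ => ‖f (t₀ + σ * u) - f t₀‖) (Set.Icc 0 T) := by
    apply Continuous.continuousOn
    fun_prop
  have hmem : R ∈ Set.Icc (‖f (t₀ + σ * 0) - f t₀‖) (‖f (t₀ + σ * T) - f t₀‖) := by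
    constructor
    · simp [hR.le]
    · have := (H (t₀ + σ * T) t₀).1
      rwa [add_sub_cancel_left, abs_mul, hσ, one_mul, hTe] at this
  obtain ⟨u, hu, hue⟩ := intermediate_value_Icc hT0 hcont hmem
  refine ⟨u, lt_of_le_of_ne hu.1 ?_, hue⟩
  rintro rfl
  simp at hue
  linarith

lemma SnowBd.porous {n : ℕ} {α L : ℝ} {f : ℝ → EuclideanSpace ℝ (Fin n)} (hα0 : 0 < α)
    (hL : 1 ≤ L) (H : SnowBd α f L) (hn : 2 ≤ n) (t₀ r : ℝ) (hr : 0 < r) :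
    ∃ z, dist (f t₀) z = 2 * r ∧ ∀ s, r / (4 * L ^ 2) ≤ dist z (f s) := by
  have hL0 : 0 < L := by linarith
  have hL2 : 1 ≤ L ^ 2 := by nlinarith
  set δ := r / (4 * L ^ 2) with hδ
  have hδ0 : 0 < δ := by positivity
  have hδr : δ * (4 * L ^ 2) = r := by rw [hδ]; field_simp
  have hδ4 : 4 * δ ≤ r := by nlinarith
  by_contra hcon
  push Not at hcon
  have hrank : 1 < Module.rank ℝ (EuclideanSpace ℝ (Fin n)) := by
    rw [rank_eq_card_basis (EuclideanSpace.basisFun (Fin n) ℝ).toBasis, Fintype.card_fin]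
    exact_mod_cast hn
  have hconn := isPreconnected_sphere hrank (f t₀) (2 * r)
  have hcov : Metric.sphere (f t₀) (2 * r) ⊆
      Metric.thickening δ (f '' Set.Ioi t₀) ∪ Metric.thickening δ (f '' Set.Iio t₀) := by
    intro z hz
    rw [Metric.mem_sphere, dist_comm] at hz
    obtain ⟨s, hs⟩ := hcon z hz
    rcases lt_trichotomy s t₀ with h | h | h
    · exact Or.inr (Metric.mem_thickening_iff.2 ⟨f s, ⟨s, h, rfl⟩, hs⟩)
    · subst h
      rw [dist_comm] at hs
      linarith
    · exact Or.inl (Metric.mem_thickening_iff.2 ⟨f s, ⟨s, h, rfl⟩, hs⟩)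
  obtain ⟨u, hu, hue⟩ := H.reach hα0 hL t₀ 1 (2 * r) (by simp) (by linarith)
  obtain ⟨v, hv, hve⟩ := H.reach hα0 hL t₀ (-1) (2 * r) (by simp) (by linarith)
  obtain ⟨z, hz, hz1, hz2⟩ := hconn _ _ Metric.isOpen_thickening Metric.isOpen_thickening hcov
    ⟨f (t₀ + 1 * u), by rw [Metric.mem_sphere, dist_eq_norm, hue],
      Metric.self_subset_thickening hδ0 _
        ⟨_, by simp only [Set.mem_Ioi]; linarith, rfl⟩⟩
    ⟨f (t₀ + -1 * v), by rw [Metric.mem_sphere, dist_eq_norm, hve],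
      Metric.self_subset_thickening hδ0 _
        ⟨_, by simp only [Set.mem_Iio]; linarith, rfl⟩⟩
  rw [Metric.mem_thickening_iff] at hz1 hz2
  obtain ⟨_, ⟨s, hs, rfl⟩, hzs⟩ := hz1
  obtain ⟨_, ⟨t, ht, rfl⟩, hzt⟩ := hz2
  rw [Set.mem_Ioi] at hs
  rw [Set.mem_Iio] at ht
  rw [Metric.mem_sphere] at hz
  have hd1 : r ≤ ‖f s - f t₀‖ := by
    rw [← dist_eq_norm]
    have := dist_triangle z (f s) (f t₀)
    linarith
  have hd2 : ‖f s - f t‖ < 2 * δ := by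
    rw [← dist_eq_norm]
    have := dist_triangle_left (f s) (f t) z
    linarith
  have e1 := hd1.trans (H s t₀).2
  have e2 : |s - t₀| ^ (1 / (1 + α)) ≤ |s - t| ^ (1 / (1 + α)) := by
    apply Real.rpow_le_rpow (abs_nonneg _) _ (by positivity)
    rw [abs_of_pos (by linarith), abs_of_pos (by linarith)]
    linarith
  have e3 := (H s t).1
  rw [inv_mul_le_iff₀ hL0] at e3
  have e4 : r ≤ L * (L * ‖f s - f t‖) :=
    e1.trans (mul_le_mul_of_nonneg_left (e2.trans e3) hL0.le)
  have e5 : L * (L * ‖f s - f t‖) < L * (L * (2 * δ)) := by gcongr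
  nlinarith

lemma SnowBd.null {n : ℕ} {α L : ℝ} {f : ℝ → EuclideanSpace ℝ (Fin n)} (hα0 : 0 < α)
    (hL : 1 ≤ L) (H : SnowBd α f L) (hn : 2 ≤ n)
    (μ : Measure (EuclideanSpace ℝ (Fin n))) [μ.IsAddHaarMeasure] : μ (Set.range f) = 0 := by
  have hL0 : 0 < L := by linarith
  by_contra hne
  have hmeas : MeasurableSet (Set.range f) :=
    ((H.continuous hα0 hL).measurableEmbedding (H.injective hα0 hL)).measurableSet_range
  have hae := IsUnifLocDoublingMeasure.ae_tendsto_measure_inter_div μ (Set.range f) (16 * L ^ 2)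
  haveI : (ae (μ.restrict (Set.range f))).NeBot := by
    rw [ae_neBot]
    intro h
    exact hne (Measure.restrict_eq_zero.1 h)
  obtain ⟨x, hx, t₀, rfl⟩ := (hae.and (ae_restrict_mem hmeas)).exists
  choose z hz1 hz2 using fun j : ℕ => H.porous hα0 hL hn t₀ (1 / ((j : ℝ) + 1)) (by positivity)
  have hδ : Filter.Tendsto (fun j : ℕ => 1 / ((j : ℝ) + 1) / (8 * L ^ 2)) Filter.atTop
      (nhdsWithin 0 (Set.Ioi 0)) := by
    refine tendsto_nhdsWithin_iff.2 ⟨?_, Filter.Eventually.of_forall fun j => ?_⟩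
    · have := (tendsto_one_div_add_atTop_nhds_zero_nat (𝕜 := ℝ)).div_const (8 * L ^ 2)
      simpa using this
    · simp only [Set.mem_Ioi]; positivity
  have ht := hx z _ hδ (Filter.Eventually.of_forall fun j => by
    rw [Metric.mem_closedBall, hz1]
    apply le_of_eq
    field_simp
    norm_num)
  have h0 : ∀ j : ℕ, Set.range f ∩ Metric.closedBall (z j) (1 / ((j : ℝ) + 1) / (8 * L ^ 2)) = ∅ := by
    intro j
    ext y
    simp only [Set.mem_inter_iff, Set.mem_empty_iff_false, iff_false, not_and]
    rintro ⟨s, rfl⟩ hs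
    rw [Metric.mem_closedBall, dist_comm] at hs
    have h1 := hz2 j s
    have h2 : 1 / ((j : ℝ) + 1) / (8 * L ^ 2) < 1 / ((j : ℝ) + 1) / (4 * L ^ 2) := by
      apply div_lt_div_of_pos_left (by positivity) (by positivity)
      nlinarith [pow_pos hL0 2]
    linarith
  simp only [h0, measure_empty, ENNReal.zero_div] at ht
  exact zero_ne_one (tendsto_nhds_unique tendsto_const_nhds ht)

lemma conj1 (N : ℕ) (α : ℝ) (hα : α ∈ Set.Ico (N : ℝ) (N + 1)) (hα0 : 0 < α)
    (f : ℝ → EuclideanSpace ℝ (Fin (N + 1))) (L : ℝ) (hL : 1 ≤ L) (H : SnowBd α f L) : False := by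
  have hL0 : 0 < L := by linarith
  rcases eq_or_lt_of_le hα.1 with h | h
  · have hN : 1 ≤ N := by
      rcases Nat.eq_zero_or_pos N with h0 | h0
      · subst h0; simp at h; linarith
      · exact h0
    have hfin : (Module.finrank ℝ (EuclideanSpace ℝ (Fin (N + 1))) : ℝ) = 1 + α := by
      rw [finrank_euclideanSpace_fin]; push_cast; linarith
    have h0 := H.null hα0 hL (by omega)
      (μH[Module.finrank ℝ (EuclideanSpace ℝ (Fin (N + 1)))])
    rw [hfin] at h0
    have h1 := (H.inv_holder hα0 hL).hausdorffMeasure_image_le (by simp; linarith)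
      (zero_le_one : (0 : ℝ) ≤ 1)
    rw [H.inv_image hα0 hL, hausdorffMeasure_real, mul_one, Real.coe_toNNReal _ (by linarith), h0,
      mul_zero] at h1
    simp at h1
  · have h1 := (H.le_dimH hα0 hL).trans (dimH_mono (Set.subset_univ _))
    rw [Real.dimH_univ_eq_finrank, finrank_euclideanSpace_fin] at h1
    rw [← ENNReal.ofReal_natCast, ENNReal.ofReal_le_ofReal_iff (by positivity)] at h1
    push_cast at h1
    linarith

/-- Sharpness of the target dimension: for `α ∈ [N, N+1)` with `α > 0`, the snowflaked
line `(ℝ, |s-t|^{1/(1+α)})` admits no bi-Lipschitz embedding into `ℝ^{N+1}` but does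
admit one into `ℝ^{N+2}`; moreover the image of any such embedding into `ℝ^{N+2}` has
Hausdorff dimension `1 + α`. -/
theorem stmt_18 (N : ℕ) (α : ℝ) (hα : α ∈ Set.Ico (N : ℝ) (N + 1)) (hα0 : 0 < α) :
    (¬ ∃ (f : ℝ → EuclideanSpace ℝ (Fin (N + 1))) (L : ℝ), 1 ≤ L ∧
        ∀ s t : ℝ, L⁻¹ * |s - t| ^ (1 / (1 + α)) ≤ ‖f s - f t‖ ∧
          ‖f s - f t‖ ≤ L * |s - t| ^ (1 / (1 + α))) ∧
    (∃ (f : ℝ → EuclideanSpace ℝ (Fin (N + 2))) (L : ℝ), 1 ≤ L ∧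
        ∀ s t : ℝ, L⁻¹ * |s - t| ^ (1 / (1 + α)) ≤ ‖f s - f t‖ ∧
          ‖f s - f t‖ ≤ L * |s - t| ^ (1 / (1 + α))) ∧
    (∀ (f : ℝ → EuclideanSpace ℝ (Fin (N + 2))) (L : ℝ), 1 ≤ L →
        (∀ s t : ℝ, L⁻¹ * |s - t| ^ (1 / (1 + α)) ≤ ‖f s - f t‖ ∧
          ‖f s - f t‖ ≤ L * |s - t| ^ (1 / (1 + α))) →
        dimH (Set.range f) = ENNReal.ofReal (1 + α)) := by
  exact ⟨fun ⟨f, L, hL, H⟩ => conj1 N α hα hα0 f L hL H, conj2 N α hα hα0,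
    fun f L hL H => le_antisymm (SnowBd.dimH_le hα0 hL H) (SnowBd.le_dimH hα0 hL H)⟩
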